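/- arXiv:2403.02811 — 3 statements merged into one kernel-verified Lean document; each statement's English description precedes it below -/
import Mathlib

section
/- Let H, H₁ and F be real Hilbert spaces, let S : H → F and Z : H₁ → F be bounded linear operators with ‖Z‖ ≤ κ, let Π_in be an orthogonal projection on H, let Π_out be an orthogonal projection on H₁, and let γ > 0. Define G := Z* ∘ (S S* + γ I)⁻¹ ∘ S and G̃ := Π_out ∘ Z* ∘ (S Π_in S* + γ I)⁻¹ ∘ S ∘ Π_in (both operator inverses exist since S S* and S Π_in S* are positive semidefinite and γ > 0). Then ‖G̃ − G‖ ≤ (κ/γ)‖S(I − Π_in)‖ + (κ/γ^{3/2})‖(I − Π_in)S*‖² + γ^{-1/2}‖(I − Π_out)Z*‖, where ‖·‖ denotes the operator norm. -/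
/-!
Write `P = Pin`, `Q = 1 - Pin`, `R = (S S* + γ)⁻¹` and `R' = (S P S* + γ)⁻¹`. Since `P` is an
orthogonal projection, `S P S* = (S P)(S P)*`, so both resolvents have the form
`A⁻¹` with `A = T T* + γ`. The identity `⟪A y, y⟫ = ‖T* y‖² + γ ‖y‖²` makes `A` coercive, hence
invertible, and yields `‖A⁻¹‖ ≤ γ⁻¹` and `‖A⁻¹ T‖ ≤ γ^(-1/2)`. By the resolvent identity
`R' - R = R (S Q S*) R'`,

  `G̃ - G = -(1 - Pout) Z* (R' S P) + Z* R (S Q S*) (R' S P) - Z* R (S Q)`,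

and since `S Q S* = (Q S*)* (Q S*)` has norm at most `‖Q S*‖²`, the triangle inequality
gives the bound.
-/

open ContinuousLinearMap
open scoped RealInnerProductSpace

section Resolvent

variable {H F : Type*}
  [NormedAddCommGroup H] [InnerProductSpace ℝ H] [CompleteSpace H]
  [NormedAddCommGroup F] [InnerProductSpace ℝ F] [CompleteSpace F]

/-- The coercivity identity behind all the resolvent estimates. -/
lemma inner_regularized (T : H →L[ℝ] F) (γ : ℝ) (y : F) :
    ⟪(T ∘L adjoint T + γ • (1 : F →L[ℝ] F)) y, y⟫ = ‖adjoint T y‖ ^ 2 + γ * ‖y‖ ^ 2 := by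
  have h : ⟪T (adjoint T y), y⟫ = ‖adjoint T y‖ ^ 2 := by
    rw [← adjoint_inner_right, real_inner_self_eq_norm_sq]
  simp [inner_add_left, real_inner_smul_left, h]

lemma isUnit_regularized (T : H →L[ℝ] F) {γ : ℝ} (hγ : 0 < γ) :
    IsUnit (T ∘L adjoint T + γ • (1 : F →L[ℝ] F)) := by
  refine isUnit_of_forall_le_norm_inner_map _ (c := ⟨γ, hγ.le⟩) hγ fun y => ?_
  rw [inner_regularized, Real.norm_eq_abs]
  refine le_trans ?_ (le_abs_self _)
  change ‖y‖ ^ 2 * γ ≤ _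
  nlinarith [sq_nonneg ‖adjoint T y‖]

lemma regularized_apply_inverse (T : H →L[ℝ] F) {γ : ℝ} (hγ : 0 < γ) (x : F) :
    (T ∘L adjoint T + γ • (1 : F →L[ℝ] F))
      (Ring.inverse (T ∘L adjoint T + γ • (1 : F →L[ℝ] F)) x) = x :=
  congrArg (fun B : F →L[ℝ] F => B x) (Ring.mul_inverse_cancel _ (isUnit_regularized T hγ))

lemma norm_inverse_regularized_le (T : H →L[ℝ] F) {γ : ℝ} (hγ : 0 < γ) :
    ‖Ring.inverse (T ∘L adjoint T + γ • (1 : F →L[ℝ] F))‖ ≤ 1 / γ := by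
  refine opNorm_le_bound _ (by positivity) fun x => ?_
  have hid := inner_regularized T γ (Ring.inverse (T ∘L adjoint T + γ • (1 : F →L[ℝ] F)) x)
  rw [regularized_apply_inverse T hγ] at hid
  set y := Ring.inverse (T ∘L adjoint T + γ • (1 : F →L[ℝ] F)) x
  have hcs := real_inner_le_norm x y
  rw [one_div, ← div_eq_inv_mul, le_div_iff₀ hγ]
  by_contra! hlt
  have hy : 0 < ‖y‖ := by
    by_contra! h0
    have : ‖y‖ = 0 := le_antisymm h0 (norm_nonneg _)
    rw [this, zero_mul] at hlt
    exact absurd hlt (not_lt.mpr (norm_nonneg x))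
  nlinarith [sq_nonneg ‖adjoint T y‖]

/-- With `y = A⁻¹ T x`, coercivity reads `‖T* y‖² + γ ‖y‖² = ⟪x, T* y⟫`, and Young's inequality
absorbs the `T* y` terms. -/
lemma norm_inverse_regularized_comp_le (T : H →L[ℝ] F) {γ : ℝ} (hγ : 0 < γ) :
    ‖Ring.inverse (T ∘L adjoint T + γ • (1 : F →L[ℝ] F)) ∘L T‖ ≤ γ ^ (-(1 : ℝ) / 2) := by
  refine opNorm_le_bound _ (by positivity) fun x => ?_
  have hid := inner_regularized T γ
    (Ring.inverse (T ∘L adjoint T + γ • (1 : F →L[ℝ] F)) (T x))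
  rw [regularized_apply_inverse T hγ, ← adjoint_inner_right] at hid
  rw [comp_apply]
  set y := Ring.inverse (T ∘L adjoint T + γ • (1 : F →L[ℝ] F)) (T x)
  have hcs := real_inner_le_norm x (adjoint T y)
  have hsq : (γ ^ (-(1 : ℝ) / 2)) ^ 2 = γ⁻¹ := by
    rw [← Real.rpow_natCast, ← Real.rpow_mul hγ.le, ← Real.rpow_neg_one]
    norm_num
  refine (sq_le_sq₀ (norm_nonneg _) (by positivity)).mp ?_
  rw [mul_pow, hsq, ← div_eq_inv_mul, le_div_iff₀ hγ]
  nlinarith [sq_nonneg (‖x‖ - 2 * ‖adjoint T y‖), sq_nonneg ‖x‖]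

end Resolvent

/-- Deterministic core of the Nyström approximation error bound for the estimated
transition operator (Theorem on the convergence rate of `G̃ - G`). -/
theorem stmt_0
    {H H₁ F : Type*}
    [NormedAddCommGroup H] [InnerProductSpace ℝ H] [CompleteSpace H]
    [NormedAddCommGroup H₁] [InnerProductSpace ℝ H₁] [CompleteSpace H₁]
    [NormedAddCommGroup F] [InnerProductSpace ℝ F] [CompleteSpace F]
    (S : H →L[ℝ] F) (Z : H₁ →L[ℝ] F) (κ : ℝ) (hZ : ‖Z‖ ≤ κ)
    (Pin : H →L[ℝ] H) (hPin_idem : Pin ∘L Pin = Pin) (hPin_sa : IsSelfAdjoint Pin)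
    (Pout : H₁ →L[ℝ] H₁) (hPout_idem : Pout ∘L Pout = Pout) (hPout_sa : IsSelfAdjoint Pout)
    (γ : ℝ) (hγ : 0 < γ) :
    IsUnit (S ∘L adjoint S + γ • (1 : F →L[ℝ] F)) ∧
    IsUnit (S ∘L Pin ∘L adjoint S + γ • (1 : F →L[ℝ] F)) ∧
    ‖(Pout ∘L adjoint Z ∘L Ring.inverse (S ∘L Pin ∘L adjoint S + γ • (1 : F →L[ℝ] F)) ∘L S ∘L Pin)
        - adjoint Z ∘L Ring.inverse (S ∘L adjoint S + γ • (1 : F →L[ℝ] F)) ∘L S‖ ≤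
      (κ / γ) * ‖S ∘L ((1 : H →L[ℝ] H) - Pin)‖
        + (κ / γ ^ ((3 : ℝ) / 2)) * ‖((1 : H →L[ℝ] H) - Pin) ∘L adjoint S‖ ^ 2
        + γ ^ (-(1 : ℝ) / 2) * ‖((1 : H₁ →L[ℝ] H₁) - Pout) ∘L adjoint Z‖ := by
  have hκ : 0 ≤ κ := (norm_nonneg Z).trans hZ
  have hPadj : adjoint Pin = Pin := hPin_sa.adjoint_eq
  have hSP : S ∘L Pin ∘L adjoint S = (S ∘L Pin) ∘L adjoint (S ∘L Pin) := by
    rw [adjoint_comp, hPadj, comp_assoc, ← comp_assoc Pin Pin, hPin_idem]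
  have hU := isUnit_regularized S hγ
  have hU' := isUnit_regularized (S ∘L Pin) hγ
  have hR := norm_inverse_regularized_le S hγ
  have hR' := norm_inverse_regularized_comp_le (S ∘L Pin) hγ
  rw [← hSP] at hU' hR'
  refine ⟨hU, hU', ?_⟩
  set A := S ∘L adjoint S + γ • (1 : F →L[ℝ] F) with hA
  set A' := S ∘L Pin ∘L adjoint S + γ • (1 : F →L[ℝ] F) with hA'
  set Q := (1 : H →L[ℝ] H) - Pin with hQ
  set Q₁ := (1 : H₁ →L[ℝ] H₁) - Pout with hQ₁
  have hdiff : A - A' = S ∘L Q ∘L adjoint S := by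
    ext x; simp [hA, hA', hQ]
  have hres : Ring.inverse A' - Ring.inverse A
      = Ring.inverse A ∘L (S ∘L Q ∘L adjoint S) ∘L Ring.inverse A' := by
    rw [← hdiff]
    change _ = Ring.inverse A * ((A - A') * Ring.inverse A')
    rw [sub_mul, mul_sub, Ring.mul_inverse_cancel _ hU', ← mul_assoc,
      Ring.inverse_mul_cancel _ hU, one_mul, mul_one]
  have hQQ : S ∘L Q ∘L adjoint S = adjoint (Q ∘L adjoint S) ∘L (Q ∘L adjoint S) := by
    have hQadj : adjoint Q = Q := by
      rw [hQ, map_sub, hPadj, one_def, adjoint_id]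
    have hQid : Q ∘L Q = Q := by
      change (1 - Pin) * (1 - Pin) = 1 - Pin
      have : Pin * Pin = Pin := hPin_idem
      rw [sub_mul, mul_sub, mul_sub, this]; simp
    rw [adjoint_comp, adjoint_adjoint, hQadj, comp_assoc, ← comp_assoc Q Q, hQid]
  have hN : ‖S ∘L Q ∘L adjoint S‖ ≤ ‖Q ∘L adjoint S‖ ^ 2 := by
    rw [hQQ, sq]
    refine (opNorm_comp_le _ _).trans_eq ?_
    rw [LinearIsometryEquiv.norm_map]
  have hZ' : ‖adjoint Z‖ ≤ κ := by rwa [LinearIsometryEquiv.norm_map]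
  have hdecomp : (Pout ∘L adjoint Z ∘L Ring.inverse A' ∘L S ∘L Pin)
        - adjoint Z ∘L Ring.inverse A ∘L S
      = -(adjoint Z ∘L Ring.inverse A ∘L (S ∘L Q))
        + adjoint Z ∘L Ring.inverse A ∘L (S ∘L Q ∘L adjoint S) ∘L
            (Ring.inverse A' ∘L S ∘L Pin)
        - (Q₁ ∘L adjoint Z) ∘L (Ring.inverse A' ∘L S ∘L Pin) := by
    ext x
    have h := congrArg (fun B : F →L[ℝ] F => adjoint Z (B (S (Pin x)))) hres
    simp only [sub_apply, comp_apply, map_sub] at h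
    simp only [sub_apply, add_apply, neg_apply, comp_apply]
    rw [← h]
    simp [hQ, hQ₁]
  have hpow : κ / γ ^ ((3 : ℝ) / 2) = κ * (1 / γ * γ ^ (-(1 : ℝ) / 2)) := by
    rw [one_div, ← Real.rpow_neg_one, ← Real.rpow_add hγ, div_eq_mul_inv, ← Real.rpow_neg hγ.le]
    norm_num
  rw [hdecomp]
  refine (norm_sub_le _ _).trans (add_le_add ((norm_add_le _ _).trans (add_le_add ?_ ?_)) ?_)
  · rw [norm_neg]
    calc _ ≤ ‖adjoint Z‖ * (‖Ring.inverse A‖ * ‖S ∘L Q‖) :=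
          (opNorm_comp_le _ _).trans (by gcongr; exact opNorm_comp_le _ _)
      _ ≤ κ * (1 / γ * ‖S ∘L Q‖) := by gcongr
      _ = _ := by ring
  · rw [hpow]
    calc _ ≤ ‖adjoint Z‖ * (‖Ring.inverse A‖ *
            (‖S ∘L Q ∘L adjoint S‖ * ‖Ring.inverse A' ∘L S ∘L Pin‖)) := by
          refine (opNorm_comp_le _ _).trans ?_
          gcongr
          refine (opNorm_comp_le _ _).trans ?_
          gcongr
          exact opNorm_comp_le _ _
      _ ≤ κ * (1 / γ * (‖Q ∘L adjoint S‖ ^ 2 * γ ^ (-(1 : ℝ) / 2))) := by gcongr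
      _ = _ := by ring
  · rw [mul_comm]
    refine (opNorm_comp_le _ _).trans ?_
    gcongr
end

section
/- With the same setting as the bound on ‖Φ X‖ (Hilbert space H₁, E = ℝ^{n_u}, operators A, Ã, B, B̃, R positive definite, Q, N = B R⁻¹ B*, Ñ = B̃ R⁻¹ B̃*, Riccati solution P, gain K = −(R + B* P B)⁻¹ B* P A, closed loop L = A + BK with ρ(L) ≤ ρ < 1 and τ(L, ρ) = sup_{k≥0} ‖L^k‖ ρ^{-k} finite, and Φ X := T⁻¹[F(P+X, A, B) − F(P+X, Ã, B̃) − R̂ X]), let S_ν := {X bounded self-adjoint on H₁ : ‖X‖ ≤ ν, P + X positive semidefinite}. If ν ≤ min{1/2, ‖N‖⁻¹}, ‖A − Ã‖ ≤ ε, ‖B − B̃‖ ≤ ε, and ε ≤ ‖B‖, then for all X₁, X₂ ∈ S_ν: ‖Φ X₁ − Φ X₂‖ ≤ 32 (τ(L, ρ)²/(1 − ρ²)) [ (‖A‖+1)² (‖P‖+1)³ (‖B‖+1)³ (‖R⁻¹‖+1)² ε + ‖L‖² ν ‖N‖ ] ‖X₁ − X₂‖. -/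
/-!
The inverse of `T : Y ↦ Y - L* Y L` is the series `∑ₖ (L*)ᵏ Y Lᵏ`, of norm at most `τ² / (1 - ρ²)`
(`stein_bound`), so it suffices to estimate the argument of `T⁻¹`.

Write `M = P + X`, `W = (I + N M)⁻¹`. The identity `M₁ W₁ - M₂ W₂ = W₁* (X₁ - X₂) W₂`
(`resolvent_sub`) turns the difference of the Riccati terms into
`A* W₁* (X₁ - X₂) W₂ A` minus the same expression for the perturbed data, which is `O(ε)` by
`sandwich_bound`. To get only the third power of `‖B‖`, the resolvent itself must be bounded linearly
in `‖B‖`: `‖W‖ ≤ 1 + ½ ‖B‖ √(‖R⁻¹‖ ‖M‖)` (`norm_inv_le`). This and the bounds `‖M W‖ ≤ ‖M‖`,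
`‖W N‖ ≤ ‖N‖` follow from energy estimates for `y + N M y = x`, obtained by pairing this equation
with `M y` and completing squares (`energy_bounds`). The quadratic remainder is handled by
`quad_bound`.
-/

open ContinuousLinearMap
open scoped RealInnerProductSpace

/-- The discrete algebraic Riccati map `M ↦ M - A* M (I + N M)⁻¹ A - Q`. -/
noncomputable def riccatiMap {H₁ : Type*} [NormedAddCommGroup H₁] [InnerProductSpace ℝ H₁]
    [CompleteSpace H₁] (A N Q M : H₁ →L[ℝ] H₁) : H₁ →L[ℝ] H₁ :=
  M - ContinuousLinearMap.adjoint A ∘L M ∘L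
    Ring.inverse ((1 : H₁ →L[ℝ] H₁) + N ∘L M) ∘L A - Q

/-- The quadratic remainder `R̂ X = L* X (I + N(P+X))⁻¹ N X L`. -/
noncomputable def quadRem {H₁ : Type*} [NormedAddCommGroup H₁] [InnerProductSpace ℝ H₁]
    [CompleteSpace H₁] (L N P X : H₁ →L[ℝ] H₁) : H₁ →L[ℝ] H₁ :=
  ContinuousLinearMap.adjoint L ∘L X ∘L
    Ring.inverse ((1 : H₁ →L[ℝ] H₁) + N ∘L (P + X)) ∘L N ∘L X ∘L L

/-- The fixed-point map `Φ X = T⁻¹[F(P+X, A, B) - F(P+X, Ã, B̃) - R̂ X]`. -/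
noncomputable def PhiMap {H₁ : Type*} [NormedAddCommGroup H₁] [InnerProductSpace ℝ H₁]
    [CompleteSpace H₁] (T : (H₁ →L[ℝ] H₁) →L[ℝ] (H₁ →L[ℝ] H₁))
    (A A' N N' Q P L X : H₁ →L[ℝ] H₁) : H₁ →L[ℝ] H₁ :=
  Ring.inverse T
    (riccatiMap A N Q (P + X) - riccatiMap A' N' Q (P + X) - quadRem L N P X)

section Helpers

variable {H : Type*} [NormedAddCommGroup H] [InnerProductSpace ℝ H] [CompleteSpace H]

/-! ### Energy estimates and bounds on `(I + N M)⁻¹` -/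

/-- `norm_star` with the instances of `H →L[ℝ] H` fixed, since `rw [norm_star]` does not find
them by unification. -/
lemma norm_star_clm (G : H →L[ℝ] H) : ‖star G‖ = ‖G‖ := norm_star G

lemma norm_apply_sq_le (G : H →L[ℝ] H) (hs : IsSelfAdjoint G) (hp : ∀ x, 0 ≤ ⟪G x, x⟫) (z : H) :
    ‖G z‖ ^ 2 ≤ ‖G‖ * ⟪G z, z⟫ := by
  rcases (norm_nonneg G).eq_or_lt with h | h
  · have : G = 0 := norm_eq_zero.mp h.symm
    simp [this]
  have h1 := hp (‖G‖ • z - G z)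
  have h2 : ⟪G (G z), z⟫ = ‖G z‖ ^ 2 := by
    rw [← real_inner_self_eq_norm_sq]
    exact hs.isSymmetric (G z) z
  have h3 : ⟪G (G z), G z⟫ ≤ ‖G‖ * ‖G z‖ ^ 2 := by
    refine (real_inner_le_norm _ _).trans ?_
    have := G.le_opNorm (G z)
    nlinarith [norm_nonneg (G z)]
  have h4 : ⟪G (‖G‖ • z - G z), ‖G‖ • z - G z⟫
      = ‖G‖ * (‖G‖ * ⟪G z, z⟫) - 2 * ‖G‖ * ‖G z‖ ^ 2 + ⟪G (G z), G z⟫ := by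
    simp only [map_sub, map_smul, inner_sub_left, inner_sub_right, real_inner_smul_left,
      real_inner_smul_right, h2, real_inner_self_eq_norm_sq]
    ring
  rw [h4] at h1
  by_contra! hc
  nlinarith

/-- If `(I + N M) y = x` with `M`, `N` positive, then the `M`-energy of `y` is dominated by that
of `x`, and the `N`-energy of `M y` by a quarter of it. -/
lemma energy_bounds (M N : H →L[ℝ] H) (hM : IsSelfAdjoint M) (hMp : ∀ x, 0 ≤ ⟪M x, x⟫)
    (hNp : ∀ x, 0 ≤ ⟪N x, x⟫) {x y : H} (h : y + N (M y) = x) :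
    ⟪M y, y⟫ ≤ ⟪M x, x⟫ ∧ ⟪N (M y), M y⟫ ≤ ⟪M x, x⟫ / 4 := by
  have hsymm : ⟪M x, y⟫ = ⟪M y, x⟫ := by
    rw [real_inner_comm]; exact (hM.isSymmetric y x).symm
  have e : ⟪M y, x⟫ = ⟪M y, y⟫ + ⟪N (M y), M y⟫ := by
    rw [real_inner_comm (M y) (N (M y)), ← inner_add_right, h]
  have h1 := hMp (y - x)
  have h2 := hMp (y - (2⁻¹ : ℝ) • x)
  simp only [map_sub, map_smul, inner_sub_left, inner_sub_right, real_inner_smul_left,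
      real_inner_smul_right, hsymm] at h1 h2
  have h3 := hNp (M y)
  constructor <;> linarith

omit [CompleteSpace H] in
lemma inner_apply_self_le (M : H →L[ℝ] H) (x : H) : ⟪M x, x⟫ ≤ ‖M‖ * ‖x‖ ^ 2 := by
  refine (real_inner_le_norm _ _).trans ?_
  nlinarith [M.le_opNorm x, norm_nonneg x]

/-- `‖M (I + N M)⁻¹‖ ≤ ‖M‖` for positive `M`, `N`. -/
lemma norm_mul_inv_le (M N W : H →L[ℝ] H) (hM : IsSelfAdjoint M) (hMp : ∀ x, 0 ≤ ⟪M x, x⟫)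
    (hNp : ∀ x, 0 ≤ ⟪N x, x⟫) (hW : (1 + N * M) * W = 1) : ‖M * W‖ ≤ ‖M‖ := by
  refine ContinuousLinearMap.opNorm_le_bound _ (norm_nonneg _) fun x => ?_
  have h : W x + N (M (W x)) = x := by
    simpa using congrArg (fun f : H →L[ℝ] H => f x) hW
  have h1 := (energy_bounds M N hM hMp hNp h).1
  have h2 := norm_apply_sq_le M hM hMp (W x)
  have h3 := inner_apply_self_le M x
  refine abs_le_of_sq_le_sq' ?_ (by positivity) |>.2
  calc ‖M (W x)‖ ^ 2 ≤ ‖M‖ * ⟪M (W x), W x⟫ := h2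
    _ ≤ ‖M‖ * (‖M‖ * ‖x‖ ^ 2) := by gcongr; exact h1.trans h3
    _ = (‖M‖ * ‖x‖) ^ 2 := by ring

/-- `‖(I + N M)⁻¹ N‖ ≤ ‖N‖` for positive `M`, `N`, by passing to adjoints. -/
lemma norm_inv_mul_le (M N W : H →L[ℝ] H) (hM : IsSelfAdjoint M) (hMp : ∀ x, 0 ≤ ⟪M x, x⟫)
    (hN : IsSelfAdjoint N) (hNp : ∀ x, 0 ≤ ⟪N x, x⟫) (hW : W * (1 + N * M) = 1) :
    ‖W * N‖ ≤ ‖N‖ := by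
  rw [← norm_star_clm, star_mul, hN.star_eq]
  refine norm_mul_inv_le N M (star W) hN hNp hMp ?_
  have := congrArg star hW
  simpa [star_mul, hN.star_eq, hM.star_eq] using this

/-- The estimate `‖(I + N M)⁻¹‖ ≤ 1 + ½ ‖B‖ √(‖S‖ ‖M‖)` for `N = B S B*`. It grows only linearly
in `‖B‖`, whereas `(I + N M)⁻¹ = I - N M (I + N M)⁻¹` alone gives a quadratic bound. -/
lemma norm_inv_le {E : Type*} [NormedAddCommGroup E] [InnerProductSpace ℝ E] [CompleteSpace E]
    (M N W : H →L[ℝ] H) (B : E →L[ℝ] H) (S : E →L[ℝ] E) (hS : IsSelfAdjoint S)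
    (hSp : ∀ x, 0 ≤ ⟪S x, x⟫) (hN : N = B ∘L S ∘L adjoint B)
    (hM : IsSelfAdjoint M) (hMp : ∀ x, 0 ≤ ⟪M x, x⟫)
    (hNp : ∀ x, 0 ≤ ⟪N x, x⟫) (hW : (1 + N * M) * W = 1) :
    ‖W‖ ≤ 1 + ‖B‖ * √(‖S‖ * ‖M‖) / 2 := by
  refine ContinuousLinearMap.opNorm_le_bound _ (by positivity) fun x => ?_
  have h : W x + N (M (W x)) = x := by
    simpa using congrArg (fun f : H →L[ℝ] H => f x) hW
  have h1 := (energy_bounds M N hM hMp hNp h).2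
  have h3 := inner_apply_self_le M x
  set z := adjoint B (M (W x)) with hz
  have hNz : N (M (W x)) = B (S z) := by rw [hN]; rfl
  have hq : ⟪S z, z⟫ ≤ ‖M‖ * ‖x‖ ^ 2 / 4 := by
    have : ⟪N (M (W x)), M (W x)⟫ = ⟪S z, z⟫ := by
      rw [hNz, hz, ContinuousLinearMap.adjoint_inner_right]
    linarith
  have h2 := norm_apply_sq_le S hS hSp z
  have h4 : ‖S z‖ ≤ √(‖S‖ * ‖M‖) / 2 * ‖x‖ := by
    refine abs_le_of_sq_le_sq' ?_ (by positivity) |>.2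
    calc ‖S z‖ ^ 2 ≤ ‖S‖ * (‖M‖ * ‖x‖ ^ 2 / 4) := h2.trans (by gcongr)
      _ = (√(‖S‖ * ‖M‖) / 2 * ‖x‖) ^ 2 := by
        rw [mul_pow, div_pow, Real.sq_sqrt (by positivity)]; ring
  have hWx : W x = x - B (S z) := by rw [← hNz]; exact eq_sub_of_add_eq h
  calc ‖W x‖ ≤ ‖x‖ + ‖B (S z)‖ := by rw [hWx]; exact norm_sub_le _ _
    _ ≤ ‖x‖ + ‖B‖ * (√(‖S‖ * ‖M‖) / 2 * ‖x‖) := by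
      gcongr; exact (B.le_opNorm _).trans (by gcongr)
    _ = _ := by ring

/-! ### The Stein operator -/

/-- Inverting the Stein operator: `Z = ∑ₖ (L*)ᵏ Y Lᵏ` whenever `Z - L* Z L = Y`, and the series is
dominated by a geometric one. -/
lemma stein_bound (L Z Y : H →L[ℝ] H) (ρ τ : ℝ) (hρ0 : 0 < ρ) (hρ1 : ρ < 1)
    (hτ : ∀ k : ℕ, ‖L ^ k‖ ≤ τ * ρ ^ k) (hZ : Z - star L * Z * L = Y) :
    ‖Z‖ ≤ τ ^ 2 / (1 - ρ ^ 2) * ‖Y‖ := by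
  have hsq : ρ ^ 2 < 1 := by nlinarith
  have hit : ∀ (V : H →L[ℝ] H) (k : ℕ),
      ‖star (L ^ k) * V * L ^ k‖ ≤ τ ^ 2 * (ρ ^ 2) ^ k * ‖V‖ := fun V k => by
    have h := hτ k
    have h0 : 0 ≤ τ * ρ ^ k := (norm_nonneg _).trans h
    calc ‖star (L ^ k) * V * L ^ k‖ ≤ ‖star (L ^ k) * V‖ * ‖L ^ k‖ := norm_mul_le _ _
      _ ≤ ‖star (L ^ k)‖ * ‖V‖ * ‖L ^ k‖ := by gcongr; exact norm_mul_le _ _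
      _ ≤ (τ * ρ ^ k) * ‖V‖ * (τ * ρ ^ k) := by rw [norm_star_clm]; gcongr
      _ = _ := by ring
  have hsum : ∀ k : ℕ, ‖Z‖ ≤ (∑ j ∈ Finset.range k, τ ^ 2 * (ρ ^ 2) ^ j * ‖Y‖)
      + ‖star (L ^ k) * Z * L ^ k‖ := by
    intro k
    induction k with
    | zero => simp
    | succ k ih =>
      rw [Finset.sum_range_succ]
      have e : star (L ^ k) * Z * L ^ k
          = star (L ^ k) * Y * L ^ k + star (L ^ (k + 1)) * Z * L ^ (k + 1) := by
        rw [← hZ, pow_succ', star_mul]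
        noncomm_ring
      rw [e] at ih
      have := norm_add_le (star (L ^ k) * Y * L ^ k) (star (L ^ (k + 1)) * Z * L ^ (k + 1))
      linarith [hit Y k]
  have hlim : Filter.Tendsto
      (fun k : ℕ => τ ^ 2 / (1 - ρ ^ 2) * ‖Y‖ + τ ^ 2 * (ρ ^ 2) ^ k * ‖Z‖) Filter.atTop
      (nhds (τ ^ 2 / (1 - ρ ^ 2) * ‖Y‖ + τ ^ 2 * 0 * ‖Z‖)) :=
    (((tendsto_pow_atTop_nhds_zero_of_lt_one (by positivity) hsq).const_mul _).mul_const _).const_add _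
  have := ge_of_tendsto' hlim (b := ‖Z‖) fun k => by
    refine (hsum k).trans (add_le_add ?_ (hit Z k))
    rw [← Finset.sum_mul, ← Finset.mul_sum, div_eq_mul_inv]
    gcongr
    rw [← tsum_geometric_of_lt_one (by positivity) hsq]
    exact (summable_geometric_of_lt_one (by positivity) hsq).sum_le_tsum _
      fun _ _ => by positivity
  simpa using this

/-! ### Lipschitz estimates for the Riccati and remainder terms -/

/-- Resolvent identity for `M ↦ M (I + N M)⁻¹`. -/
lemma resolvent_sub (N M₁ M₂ W₁ W₂ : H →L[ℝ] H) (hN : IsSelfAdjoint N) (hM₁ : IsSelfAdjoint M₁)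
    (hr₁ : (1 + N * M₁) * W₁ = 1) (hr₂ : (1 + N * M₂) * W₂ = 1) :
    M₁ * W₁ - M₂ * W₂ = star W₁ * (M₁ - M₂) * W₂ := by
  have hs : star W₁ * (1 + M₁ * N) = 1 := by
    simpa [star_mul, hN.star_eq, hM₁.star_eq] using congrArg star hr₁
  calc M₁ * W₁ - M₂ * W₂
      = star W₁ * (1 + M₁ * N) * (M₁ * W₁) - star W₁ * (1 + M₁ * N) * (M₂ * W₂) := by
        rw [hs]; simp
    _ = star W₁ * M₁ * ((1 + N * M₁) * W₁) - star W₁ * (1 + M₁ * N) * (M₂ * W₂) := by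
        noncomm_ring
    _ = star W₁ * M₁ * ((1 + N * M₂) * W₂) - star W₁ * (1 + M₁ * N) * (M₂ * W₂) := by
        rw [hr₁, hr₂]
    _ = _ := by noncomm_ring

/-- Perturbing `N` in the resolvent; the factor `M (I + N' M)⁻¹` is kept together because it is
bounded by `‖M‖`. -/
lemma norm_resolvent_sub_le (N N' M W W' : H →L[ℝ] H)
    (hM : IsSelfAdjoint M) (hMp : ∀ x, 0 ≤ ⟪M x, x⟫) (hNp' : ∀ x, 0 ≤ ⟪N' x, x⟫)
    (hl : W * (1 + N * M) = 1) (hr' : (1 + N' * M) * W' = 1) :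
    ‖W - W'‖ ≤ ‖W‖ * ‖N - N'‖ * ‖M‖ := by
  have e : W - W' = W * (N' - N) * (M * W') := by
    calc W - W' = W * ((1 + N' * M) * W') - W * (1 + N * M) * W' := by rw [hl, hr']; simp
      _ = _ := by noncomm_ring
  rw [e]
  calc ‖W * (N' - N) * (M * W')‖ ≤ ‖W * (N' - N)‖ * ‖M * W'‖ := norm_mul_le _ _
    _ ≤ ‖W‖ * ‖N' - N‖ * ‖M‖ := by
      gcongr
      · exact norm_mul_le _ _
      · exact norm_mul_inv_le M N' W' hM hMp hNp' hr'
    _ = _ := by rw [norm_sub_rev N' N]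

omit [CompleteSpace H] in
lemma norm_mul3_le (a b c : H →L[ℝ] H) {x y z : ℝ} (ha : ‖a‖ ≤ x) (hb : ‖b‖ ≤ y) (hc : ‖c‖ ≤ z) :
    ‖a * b * c‖ ≤ x * y * z := by
  have hx := (norm_nonneg a).trans ha
  have hy := (norm_nonneg b).trans hb
  calc ‖a * b * c‖ ≤ ‖a * b‖ * ‖c‖ := norm_mul_le _ _
    _ ≤ ‖a‖ * ‖b‖ * ‖c‖ := by gcongr; exact norm_mul_le _ _
    _ ≤ x * y * z := by gcongr

/-- The part of the Lipschitz constant that is proportional to `ε`. The perturbation `A' - A` is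
expanded rather than estimating `‖A'‖`: its size is controlled only by `‖B‖`. -/
lemma sandwich_bound (A A' D V₁ V₂ V₁' V₂' : H →L[ℝ] H) {w δ ε : ℝ}
    (h1' : ‖V₁'‖ ≤ w) (h2 : ‖V₂‖ ≤ w) (h2' : ‖V₂'‖ ≤ w)
    (hd1 : ‖V₁ - V₁'‖ ≤ δ) (hd2 : ‖V₂ - V₂'‖ ≤ δ) (hA : ‖A - A'‖ ≤ ε) :
    ‖star A * (star V₁ * D * V₂) * A - star A' * (star V₁' * D * V₂') * A'‖
      ≤ (2 * w * δ * ‖A‖ ^ 2 + w ^ 2 * (2 * ‖A‖ * ε + ε ^ 2)) * ‖D‖ := by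
  have hA' : ‖A' - A‖ ≤ ε := by rwa [norm_sub_rev]
  have hw : 0 ≤ w := (norm_nonneg _).trans h2
  have hδ : 0 ≤ δ := (norm_nonneg _).trans hd1
  have e : star A * (star V₁ * D * V₂) * A - star A' * (star V₁' * D * V₂') * A'
      = star A * (star (V₁ - V₁') * D * V₂ + star V₁' * D * (V₂ - V₂')) * A
        - star A * (star V₁' * D * V₂') * (A' - A)
        - star (A' - A) * (star V₁' * D * V₂') * A
        - star (A' - A) * (star V₁' * D * V₂') * (A' - A) := by
    simp only [star_sub]; noncomm_ring
  have b0 : ‖star V₁' * D * V₂'‖ ≤ w * ‖D‖ * w :=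
    norm_mul3_le _ _ _ (by rwa [norm_star_clm]) le_rfl h2'
  have b1 : ‖star (V₁ - V₁') * D * V₂ + star V₁' * D * (V₂ - V₂')‖
      ≤ δ * ‖D‖ * w + w * ‖D‖ * δ :=
    norm_add_le_of_le (norm_mul3_le _ _ _ (by rwa [norm_star_clm]) le_rfl h2)
      (norm_mul3_le _ _ _ (by rwa [norm_star_clm]) le_rfl hd2)
  have t1 := norm_mul3_le (star A) _ A (norm_star A).le b1 le_rfl
  have t2 := norm_mul3_le (star A) _ (A' - A) (norm_star A).le b0 hA'
  have t3 := norm_mul3_le (star (A' - A)) _ A ((norm_star _).le.trans hA') b0 le_rfl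
  have t4 := norm_mul3_le (star (A' - A)) _ (A' - A) ((norm_star _).le.trans hA') b0 hA'
  rw [e]
  refine (norm_sub_le_of_le (norm_sub_le_of_le (norm_sub_le_of_le t1 t2) t3) t4).trans ?_
  apply le_of_eq; ring

/-- The quadratic remainder contributes a Lipschitz constant `3 ‖L‖² ν ‖N‖`; one factor `ν ‖N‖`
of the term quadratic in it is absorbed by `ν ‖N‖ ≤ 1`. -/
lemma quad_bound (L N M₁ M₂ X₁ X₂ W₁ W₂ : H →L[ℝ] H) {ν : ℝ} (hM : M₁ - M₂ = X₁ - X₂)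
    (hX₁ : ‖X₁‖ ≤ ν) (hX₂ : ‖X₂‖ ≤ ν) (hνN : ν * ‖N‖ ≤ 1)
    (hl₁ : W₁ * (1 + N * M₁) = 1) (hr₂ : (1 + N * M₂) * W₂ = 1)
    (hWN₁ : ‖W₁ * N‖ ≤ ‖N‖) (hWN₂ : ‖W₂ * N‖ ≤ ‖N‖) :
    ‖star L * (X₁ * (W₁ * N) * X₁) * L - star L * (X₂ * (W₂ * N) * X₂) * L‖
      ≤ 3 * (‖L‖ ^ 2 * ν * ‖N‖) * ‖X₁ - X₂‖ := by
  have hν : 0 ≤ ν := (norm_nonneg _).trans hX₁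
  have e0 : W₁ * N - W₂ * N = - ((W₁ * N) * (X₁ - X₂) * (W₂ * N)) := by
    calc W₁ * N - W₂ * N = W₁ * ((1 + N * M₂) * W₂) * N - W₁ * (1 + N * M₁) * (W₂ * N) := by
          rw [hl₁, hr₂]; simp
      _ = - ((W₁ * N) * (M₁ - M₂) * (W₂ * N)) := by noncomm_ring
      _ = _ := by rw [hM]
  have e : star L * (X₁ * (W₁ * N) * X₁) * L - star L * (X₂ * (W₂ * N) * X₂) * L
      = star L * ((X₁ - X₂) * (W₁ * N) * X₁ + X₂ * (W₁ * N - W₂ * N) * X₁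
        + X₂ * (W₂ * N) * (X₁ - X₂)) * L := by noncomm_ring
  have b := norm_add_le_of_le (norm_add_le_of_le
      (norm_mul3_le (X₁ - X₂) _ X₁ le_rfl hWN₁ hX₁)
      (norm_mul3_le X₂ (W₁ * N - W₂ * N) X₁ (y := ‖N‖ * ‖X₁ - X₂‖ * ‖N‖) hX₂
        (by rw [e0, norm_neg]; exact norm_mul3_le _ (X₁ - X₂) _ hWN₁ le_rfl hWN₂) hX₁))
      (norm_mul3_le X₂ _ (X₁ - X₂) hX₂ hWN₂ le_rfl)
  rw [e]
  refine (norm_mul3_le (star L) _ L (norm_star L).le b le_rfl).trans ?_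
  have : (ν * ‖N‖) * (ν * ‖N‖) ≤ ν * ‖N‖ := by
    have : 0 ≤ ν * ‖N‖ := by positivity
    nlinarith
  calc _ = ‖L‖ ^ 2 * ‖X₁ - X₂‖ * (2 * (ν * ‖N‖) + (ν * ‖N‖) * (ν * ‖N‖)) := by ring
    _ ≤ ‖L‖ ^ 2 * ‖X₁ - X₂‖ * (2 * (ν * ‖N‖) + ν * ‖N‖) := by gcongr
    _ = _ := by ring

/-! ### The control operators `R`, `B` and the constant -/

variable {E : Type*} [NormedAddCommGroup E] [InnerProductSpace ℝ E] [CompleteSpace E]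

lemma inverse_pos (R : E →L[ℝ] E) (hR : IsSelfAdjoint R) (hp : ∀ u, u ≠ 0 → 0 < ⟪R u, u⟫) :
    IsSelfAdjoint (Ring.inverse R) ∧ ∀ u, 0 ≤ ⟪Ring.inverse R u, u⟫ := by
  by_cases h : IsUnit R
  · refine ⟨?_, fun u => ?_⟩
    · rw [IsSelfAdjoint, ← Ring.inverse_star, hR.star_eq]
    · have hu : R (Ring.inverse R u) = u := by
        simpa using congrArg (fun f : E →L[ℝ] E => f u) (Ring.mul_inverse_cancel R h)
      rcases eq_or_ne (Ring.inverse R u) 0 with h0 | h0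
      · simp [h0]
      · have := hp _ h0
        rw [hu, real_inner_comm] at this
        exact this.le
  · simp [Ring.inverse_non_unit R h]

lemma conj_pos (N : H →L[ℝ] H) (B : E →L[ℝ] H) (S : E →L[ℝ] E) (hS : IsSelfAdjoint S)
    (hSp : ∀ x, 0 ≤ ⟪S x, x⟫) (hN : N = B ∘L S ∘L adjoint B) :
    IsSelfAdjoint N ∧ ∀ x, 0 ≤ ⟪N x, x⟫ := by
  constructor
  · rw [hN]; exact hS.conj_adjoint B
  · intro x
    have := hSp (adjoint B x)
    rw [ContinuousLinearMap.adjoint_inner_right] at this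
    rw [hN]; exact this

lemma norm_conj_sub_le (B B' : E →L[ℝ] H) (S : E →L[ℝ] E) {ε : ℝ} (hB : ‖B - B'‖ ≤ ε)
    (hε : ε ≤ ‖B‖) :
    ‖B ∘L S ∘L adjoint B - B' ∘L S ∘L adjoint B'‖ ≤ 3 * ‖B‖ * ‖S‖ * ε := by
  have e : B ∘L S ∘L adjoint B - B' ∘L S ∘L adjoint B'
      = (B - B') ∘L (S ∘L adjoint B) + B' ∘L (S ∘L adjoint (B - B')) := by
    ext x; simp
  have hε0 : 0 ≤ ε := (norm_nonneg _).trans hB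
  have hB' : ‖B'‖ ≤ 2 * ‖B‖ := by
    have := norm_sub_norm_le B' B
    rw [norm_sub_rev] at this
    linarith
  rw [e]
  calc _ ≤ ‖B - B'‖ * (‖S‖ * ‖adjoint B‖) + ‖B'‖ * (‖S‖ * ‖adjoint (B - B')‖) := by
        refine norm_add_le_of_le ?_ ?_ <;>
        · refine (ContinuousLinearMap.opNorm_comp_le _ _).trans ?_
          gcongr; exact ContinuousLinearMap.opNorm_comp_le _ _
    _ ≤ ε * (‖S‖ * ‖B‖) + (2 * ‖B‖) * (‖S‖ * ε) := by
        rw [LinearIsometryEquiv.norm_map, LinearIsometryEquiv.norm_map]; gcongr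
    _ = _ := by ring

/-- The real inequality behind the `ε`-part of the constant: with `w = 1 + β √(s m)` one has
`w² ≤ (β + 1)² (s + 1) (p + 1)`. -/
lemma scalar_bound {α β s p m ε : ℝ} (hα : 0 ≤ α) (hβ : 0 ≤ β) (hs : 0 ≤ s) (hp : 0 ≤ p)
    (hm : 0 ≤ m) (hmp : m ≤ p + 1) (hε : 0 ≤ ε) (hεβ : ε ≤ β) :
    2 * (1 + β * √(s * m)) * ((1 + β * √(s * m)) * (3 * β * s * ε) * m) * α ^ 2
      + (1 + β * √(s * m)) ^ 2 * (2 * α * ε + ε ^ 2)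
      ≤ 8 * ((α + 1) ^ 2 * (p + 1) ^ 3 * (β + 1) ^ 3 * (s + 1) ^ 2 * ε) := by
  have h1 : √(s * m) ≤ √((s + 1) * (p + 1)) := Real.sqrt_le_sqrt (by gcongr; linarith)
  have h2 : 1 ≤ √((s + 1) * (p + 1)) := Real.one_le_sqrt.mpr (by nlinarith)
  have hw : (1 + β * √(s * m)) ^ 2 ≤ (β + 1) ^ 2 * ((s + 1) * (p + 1)) := by
    rw [← Real.sq_sqrt (by positivity : 0 ≤ (s + 1) * (p + 1)), ← mul_pow]
    gcongr
    nlinarith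
  set v := (1 + β * √(s * m)) ^ 2 with hv
  have hv0 : 0 ≤ v := by positivity
  have t1 : v * (6 * β * s * m * α ^ 2 * ε)
      ≤ (β + 1) ^ 2 * ((s + 1) * (p + 1)) * (6 * (β + 1) * (s + 1) * (p + 1) ^ 2 * (α + 1) ^ 2 * ε) := by
    have : m ≤ (p + 1) ^ 2 := by nlinarith
    gcongr <;> linarith
  have t2 : v * (2 * α * ε + ε ^ 2)
      ≤ (β + 1) ^ 2 * ((s + 1) * (p + 1)) * (2 * (β + 1) * (s + 1) * (p + 1) ^ 2 * (α + 1) ^ 2 * ε) := by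
    have hy : 2 * α + ε ≤ 2 * (β + 1) * (s + 1) * (p + 1) ^ 2 * (α + 1) ^ 2 := by
      have a1 : 2 * α + ε ≤ 2 * (β + 1) * (α + 1) ^ 2 := by nlinarith [mul_nonneg hβ hα, mul_nonneg hβ (sq_nonneg α), sq_nonneg α]
      have a2 : 1 ≤ (s + 1) * (p + 1) ^ 2 :=
        one_le_mul_of_one_le_of_one_le (by linarith) (one_le_pow₀ (by linarith))
      calc 2 * α + ε ≤ 2 * (β + 1) * (α + 1) ^ 2 * 1 := by linarith
        _ ≤ 2 * (β + 1) * (α + 1) ^ 2 * ((s + 1) * (p + 1) ^ 2) := by gcongr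
        _ = _ := by ring
    calc v * (2 * α * ε + ε ^ 2) = v * ((2 * α + ε) * ε) := by ring
      _ ≤ _ := by gcongr
  calc _ = v * (6 * β * s * m * α ^ 2 * ε) + v * (2 * α * ε + ε ^ 2) := by rw [hv]; ring
    _ ≤ _ := add_le_add t1 t2
    _ = _ := by ring

end Helpers

/-! ### The Lipschitz estimate for `Φ` -/

set_option maxHeartbeats 1000000 in
/-- Lipschitz estimate for the fixed-point map `Φ` on the set `S_ν` of admissible
self-adjoint perturbations of the Riccati operator. -/
theorem stmt_11
    {H₁ : Type*} [NormedAddCommGroup H₁] [InnerProductSpace ℝ H₁] [CompleteSpace H₁]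
    {n : ℕ}
    (A A' : H₁ →L[ℝ] H₁)
    (B B' : EuclideanSpace ℝ (Fin n) →L[ℝ] H₁)
    (R : EuclideanSpace ℝ (Fin n) →L[ℝ] EuclideanSpace ℝ (Fin n))
    (hR_sa : IsSelfAdjoint R) (hR_pos : ∀ u, u ≠ 0 → 0 < ⟪R u, u⟫)
    (Q : H₁ →L[ℝ] H₁) (hQ_sa : IsSelfAdjoint Q) (hQ_pos : ∀ x, 0 ≤ ⟪Q x, x⟫)
    (N N' : H₁ →L[ℝ] H₁)
    (hN : N = B ∘L Ring.inverse R ∘L adjoint B)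
    (hN' : N' = B' ∘L Ring.inverse R ∘L adjoint B')
    (P : H₁ →L[ℝ] H₁) (hP_sa : IsSelfAdjoint P) (hP_pos : ∀ x, 0 ≤ ⟪P x, x⟫)
    (hP_unit : IsUnit ((1 : H₁ →L[ℝ] H₁) + N ∘L P))
    (hP_ric : P = adjoint A ∘L P ∘L Ring.inverse ((1 : H₁ →L[ℝ] H₁) + N ∘L P) ∘L A + Q)
    (K : H₁ →L[ℝ] EuclideanSpace ℝ (Fin n))
    (hK : K = -(Ring.inverse (R + adjoint B ∘L P ∘L B) ∘L adjoint B ∘L P ∘L A))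
    (L : H₁ →L[ℝ] H₁) (hL : L = A + B ∘L K)
    (ρ : ℝ) (hρ0 : 0 < ρ) (hρ1 : ρ < 1)
    (hspec : spectralRadius ℝ L ≤ ENNReal.ofReal ρ)
    (hbdd : BddAbove (Set.range fun k : ℕ => ‖L ^ k‖ / ρ ^ k))
    (τ : ℝ) (hτ : τ = ⨆ k : ℕ, ‖L ^ k‖ / ρ ^ k)
    (T : (H₁ →L[ℝ] H₁) →L[ℝ] (H₁ →L[ℝ] H₁))
    (hT : ∀ Y, T Y = Y - adjoint L ∘L Y ∘L L) (hT_unit : IsUnit T)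
    (ν : ℝ) (hν : ν ≤ min (1 / 2 : ℝ) ‖N‖⁻¹)
    (ε : ℝ) (hA : ‖A - A'‖ ≤ ε) (hB : ‖B - B'‖ ≤ ε) (hεB : ε ≤ ‖B‖) :
    ∀ X₁ X₂ : H₁ →L[ℝ] H₁,
      IsSelfAdjoint X₁ → ‖X₁‖ ≤ ν → (∀ x, 0 ≤ ⟪(P + X₁) x, x⟫) →
      IsSelfAdjoint X₂ → ‖X₂‖ ≤ ν → (∀ x, 0 ≤ ⟪(P + X₂) x, x⟫) →
      IsUnit ((1 : H₁ →L[ℝ] H₁) + N ∘L (P + X₁)) →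
      IsUnit ((1 : H₁ →L[ℝ] H₁) + N' ∘L (P + X₁)) →
      IsUnit ((1 : H₁ →L[ℝ] H₁) + N ∘L (P + X₂)) →
      IsUnit ((1 : H₁ →L[ℝ] H₁) + N' ∘L (P + X₂)) →
      ‖PhiMap T A A' N N' Q P L X₁ - PhiMap T A A' N N' Q P L X₂‖ ≤
        32 * (τ ^ 2 / (1 - ρ ^ 2)) *
          ((‖A‖ + 1) ^ 2 * (‖P‖ + 1) ^ 3 * (‖B‖ + 1) ^ 3 * (‖Ring.inverse R‖ + 1) ^ 2 * ε +
            ‖L‖ ^ 2 * ν * ‖N‖) * ‖X₁ - X₂‖ := by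
  intro X₁ X₂ hX₁ hX₁n hM₁p hX₂ hX₂n hM₂p hu₁ hu₁' hu₂ hu₂'
  obtain ⟨hS, hSp⟩ := inverse_pos R hR_sa hR_pos
  set S := Ring.inverse R with hSdef
  obtain ⟨hNs, hNp⟩ := conj_pos N B S hS hSp hN
  obtain ⟨hNs', hNp'⟩ := conj_pos N' B' S hS hSp hN'
  have hε0 : 0 ≤ ε := (norm_nonneg _).trans hA
  have hν0 : 0 ≤ ν := (norm_nonneg _).trans hX₁n
  have hν2 : ν ≤ 1 / 2 := hν.trans (min_le_left _ _)
  have hνN : ν * ‖N‖ ≤ 1 :=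
    (mul_le_mul_of_nonneg_right (hν.trans (min_le_right _ _)) (norm_nonneg N)).trans
      inv_mul_le_one
  have hB' : ‖B'‖ ≤ 2 * ‖B‖ := by
    have := norm_sub_norm_le B' B
    rw [norm_sub_rev] at this
    linarith
  have hNN : ‖N - N'‖ ≤ 3 * ‖B‖ * ‖S‖ * ε := by
    rw [hN, hN']; exact norm_conj_sub_le B B' S hB hεB
  have hM₁ : IsSelfAdjoint (P + X₁) := hP_sa.add hX₁
  have hM₂ : IsSelfAdjoint (P + X₂) := hP_sa.add hX₂
  have hMn : ∀ X : H₁ →L[ℝ] H₁, ‖X‖ ≤ ν → ‖P + X‖ ≤ ‖P‖ + 1 / 2 := fun X hX =>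
    norm_add_le_of_le le_rfl (hX.trans hν2)
  -- a common bound for all four resolvents
  set m := ‖P‖ + 1 / 2 with hm
  have hm0 : 0 ≤ m := by positivity
  set w := 1 + ‖B‖ * √(‖S‖ * m) with hw
  have hWb : ∀ M W : H₁ →L[ℝ] H₁, IsSelfAdjoint M → (∀ x, 0 ≤ ⟪M x, x⟫) → ‖M‖ ≤ m →
      (1 + N * M) * W = 1 → ‖W‖ ≤ w := fun M W h1 h2 h3 h4 => by
    refine (norm_inv_le M N W B S hS hSp hN h1 h2 hNp h4).trans ?_
    have : ‖B‖ * √(‖S‖ * ‖M‖) ≤ ‖B‖ * √(‖S‖ * m) := by gcongr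
    have h0 : 0 ≤ ‖B‖ * √(‖S‖ * m) := by positivity
    linarith
  have hWb' : ∀ M W : H₁ →L[ℝ] H₁, IsSelfAdjoint M → (∀ x, 0 ≤ ⟪M x, x⟫) → ‖M‖ ≤ m →
      (1 + N' * M) * W = 1 → ‖W‖ ≤ w := fun M W h1 h2 h3 h4 => by
    refine (norm_inv_le M N' W B' S hS hSp hN' h1 h2 hNp' h4).trans ?_
    have : ‖B'‖ * √(‖S‖ * ‖M‖) ≤ (2 * ‖B‖) * √(‖S‖ * m) := by gcongr
    linarith
  have hl₁ := Ring.inverse_mul_cancel _ hu₁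
  have hr₁ := Ring.mul_inverse_cancel _ hu₁
  have hr₁' := Ring.mul_inverse_cancel _ hu₁'
  have hl₂ := Ring.inverse_mul_cancel _ hu₂
  have hr₂ := Ring.mul_inverse_cancel _ hu₂
  have hr₂' := Ring.mul_inverse_cancel _ hu₂'
  have hF : ∀ a b c d q x₁ : H₁ →L[ℝ] H₁,
      PhiMap T a b c d q P L x₁ = Ring.inverse T
        ((P + x₁ - star a * ((P + x₁) * Ring.inverse (1 + c ∘L (P + x₁))) * a - q)
        - (P + x₁ - star b * ((P + x₁) * Ring.inverse (1 + d ∘L (P + x₁))) * b - q)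
        - star L * (x₁ * (Ring.inverse (1 + c ∘L (P + x₁)) * c) * x₁) * L) :=
    fun _ _ _ _ _ _ => rfl
  rw [hF A A' N N' Q X₁, hF A A' N N' Q X₂, ← map_sub]
  set W₁ := Ring.inverse (1 + N ∘L (P + X₁))
  set W₁' := Ring.inverse (1 + N' ∘L (P + X₁))
  set W₂ := Ring.inverse (1 + N ∘L (P + X₂))
  set W₂' := Ring.inverse (1 + N' ∘L (P + X₂))
  have hδ : ∀ M W W' : H₁ →L[ℝ] H₁, IsSelfAdjoint M → (∀ x, 0 ≤ ⟪M x, x⟫) → ‖M‖ ≤ m →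
      ‖W‖ ≤ w → W * (1 + N * M) = 1 → (1 + N' * M) * W' = 1 →
      ‖W - W'‖ ≤ w * (3 * ‖B‖ * ‖S‖ * ε) * m := fun M W W' h1 h2 h3 h4 h5 h6 =>
    (norm_resolvent_sub_le N N' M W W' h1 h2 hNp' h5 h6).trans (by gcongr)
  have hW₁ := hWb _ W₁ hM₁ hM₁p (hMn _ hX₁n) hr₁
  have hW₂ := hWb _ W₂ hM₂ hM₂p (hMn _ hX₂n) hr₂
  have hb := sandwich_bound A A' (X₁ - X₂) W₁ W₂ W₁' W₂'
    (hWb' _ W₁' hM₁ hM₁p (hMn _ hX₁n) hr₁') hW₂ (hWb' _ W₂' hM₂ hM₂p (hMn _ hX₂n) hr₂')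
    (hδ _ W₁ W₁' hM₁ hM₁p (hMn _ hX₁n) hW₁ hl₁ hr₁')
    (hδ _ W₂ W₂' hM₂ hM₂p (hMn _ hX₂n) hW₂ hl₂ hr₂') hA
  have hsc := scalar_bound (norm_nonneg A) (norm_nonneg B) (norm_nonneg S) (norm_nonneg P)
    hm0 (by linarith : m ≤ ‖P‖ + 1) hε0 hεB
  have hMM : P + X₁ - (P + X₂) = X₁ - X₂ := by abel
  have hq := quad_bound L N (P + X₁) (P + X₂) X₁ X₂ W₁ W₂ hMM hX₁n hX₂n hνN hl₁ hr₂
    (norm_inv_mul_le _ N W₁ hM₁ hM₁p hNs hNp hl₁) (norm_inv_mul_le _ N W₂ hM₂ hM₂p hNs hNp hl₂)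
  have hres := resolvent_sub N _ _ W₁ W₂ hNs hM₁ hr₁ hr₂
  have hres' := resolvent_sub N' _ _ W₁' W₂' hNs' hM₁ hr₁' hr₂'
  rw [hMM] at hres hres'
  rw [← hres, ← hres'] at hb
  set c₁ := (‖A‖ + 1) ^ 2 * (‖P‖ + 1) ^ 3 * (‖B‖ + 1) ^ 3 * (‖S‖ + 1) ^ 2 * ε with hc₁
  have hc₁0 : 0 ≤ c₁ := by positivity
  have hc₂0 : 0 ≤ ‖L‖ ^ 2 * ν * ‖N‖ := by positivity
  have hk : ∀ k : ℕ, ‖L ^ k‖ ≤ τ * ρ ^ k := fun k => by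
    rw [← div_le_iff₀ (by positivity), hτ]
    exact le_ciSup hbdd k
  suffices key : ∀ Y, Y = -(star A * ((P + X₁) * W₁ - (P + X₂) * W₂) * A
        - star A' * ((P + X₁) * W₁' - (P + X₂) * W₂') * A')
        - (star L * (X₁ * (W₁ * N) * X₁) * L - star L * (X₂ * (W₂ * N) * X₂) * L) →
      ‖Ring.inverse T Y‖ ≤ 32 * (τ ^ 2 / (1 - ρ ^ 2)) * (c₁ + ‖L‖ ^ 2 * ν * ‖N‖) * ‖X₁ - X₂‖ by
    refine key _ ?_
    noncomm_ring
  intro Y e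
  have hTY : T (Ring.inverse T Y) = Y := by
    simpa using congrArg (fun f : (H₁ →L[ℝ] H₁) →L[ℝ] (H₁ →L[ℝ] H₁) => f Y)
      (Ring.mul_inverse_cancel T hT_unit)
  have hst := stein_bound L (Ring.inverse T Y) Y ρ τ hρ0 hρ1 hk
    ((hT (Ring.inverse T Y)).symm.trans hTY)
  have hYn : ‖Y‖ ≤ 32 * (c₁ + ‖L‖ ^ 2 * ν * ‖N‖) * ‖X₁ - X₂‖ := by
    rw [e]
    refine (norm_sub_le_of_le ((norm_neg _).le.trans hb) hq).trans ?_
    rw [← add_mul]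
    refine mul_le_mul_of_nonneg_right ?_ (norm_nonneg _)
    linarith
  have hτ0 : 0 ≤ τ ^ 2 / (1 - ρ ^ 2) := div_nonneg (sq_nonneg _)
    (sub_nonneg.mpr (pow_le_one₀ hρ0.le hρ1.le))
  calc _ ≤ _ := hst
    _ ≤ τ ^ 2 / (1 - ρ ^ 2) * (32 * (c₁ + ‖L‖ ^ 2 * ν * ‖N‖) * ‖X₁ - X₂‖) := by gcongr
    _ = _ := by ring
end

section
/- Let H₁ be a real Hilbert space and E = ℝ^{n_u}. Let A, Ã : H₁ → H₁ and B, B̃ : E → H₁ be bounded, Q : H₁ → H₁ bounded self-adjoint positive semidefinite, and R : E → E self-adjoint with ⟨u, Ru⟩ ≥ ‖u‖² for all u ∈ E. Let P and P̃ be bounded self-adjoint positive semidefinite solutions of the discrete algebraic Riccati equations for (A, B, Q, R) and (Ã, B̃, Q, R) respectively, with gains K := −(R + B* P B)⁻¹ B* P A and K̃ := −(R + B̃* P̃ B̃)⁻¹ B̃* P̃ Ã. Let L := A + B K, let ζ ∈ (0,1) satisfy ρ(L) ≤ ζ with τ(L, ζ) := sup_{k≥0} ‖L^k‖ ζ^{-k}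 finite, and let Γ := 1 + max{‖A‖, ‖B‖, ‖P‖, ‖K‖}. Fix z₀ ∈ H₁ with ‖z₀‖ ≤ κ, and define z_{i+1} := (A + B K) z_i, z_0 = z₀, ẑ_{i+1} := (A + B K̃) ẑ_i, ẑ_0 = z₀, J := Σ_{i≥0} (⟨z_i, Q z_i⟩ + ⟨K z_i, R K z_i⟩), and Ĵ := Σ_{i≥0} (⟨ẑ_i, Q ẑ_i⟩ + ⟨K̃ ẑ_i, R K̃ ẑ_i⟩). Suppose ‖A − Ã‖ ≤ ε, ‖B − B̃‖ ≤ ε, ‖P − P̃‖ ≤ g(ε) for some g(ε) ≥ ε with g(ε) ≤ (1 − ζ)/(6 ‖B‖ τ(L, ζ) Γ²). Then both series converge and Ĵ − J ≤ 36 ‖R‖ Γ⁹ g(ε)² κ² τ(L, ζ)² / (1 − ζ²). -/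
open ContinuousLinearMap
open scoped RealInnerProductSpace

/-!
Write `S = R + B* P B`, `S' = R + B'* P' B'`, `Δ = K' - K` and `m = Γ - 1`.

*Cost excess.* Completing the square in the Riccati equation gives, for every state `x` and every
input `u`,
`⟨x, P x⟩ + ⟨u - K x, S (u - K x)⟩ = ⟨x, Q x⟩ + ⟨u, R u⟩ + ⟨A x + B u, P (A x + B u)⟩`
(`riccati_identity`). Telescoping along a trajectory that tends to `0` shows that its total cost is
`⟨z₀, P z₀⟩ + ∑ ⟨Δ zᵢ, S Δ zᵢ⟩` (`hasSum_cost`). For the gain `K` the correction vanishes, so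
`Ĵ - J = ∑ ⟨Δ ẑᵢ, S Δ ẑᵢ⟩`, and `S ≤ ‖R‖ Γ³`.

*Gain perturbation.* The crude bound `‖B Δ‖ = O(‖B‖ Γ³ g)` is not enough for stability under the
given smallness of `g`. Instead `Δ` is split as `Δ = E₁ + E₂ L` with `‖E₁‖ + ‖E₂‖ ≤ 3 Γ² g`, where
`E₁ = -S'⁻¹ B'* P' (A' - A + (B' - B) K)` and `E₂ = -S'⁻¹ (B'* P' - B* P)`. If `g < 1` this follows
from `‖S'⁻¹ B'* P'‖² ≤ ‖P'‖ / 4` (`norm_gain_sq_le`); if `g ≥ 1`, one takes `E₁ = Δ`, `E₂ = 0` and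
uses `‖K'‖² ≤ ‖P'‖`, itself a consequence of the Riccati identity.

*Stability.* An insertion of `B E₂ L` does not lower the total power of `L` in a product, so it is
as harmless as `B E₁`: by induction on `k`, simultaneously for all `j`,
`‖L ^ j ẑₖ‖ ≤ τ ζ ^ j ((1 + ζ) / 2) ^ k κ` (`trajectory_decay`). Summing the geometric series with
ratio `((1 + ζ) / 2) ^ 2` costs a factor at most `2` compared with `1 / (1 - ζ ^ 2)`, and
`‖Δ‖ ≤ 3 Γ³ g`, which gives the bound even with `18` in place of `36`.
-/

section Aux

variable {H : Type*} [NormedAddCommGroup H] [InnerProductSpace ℝ H]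
  {E : Type*} [NormedAddCommGroup E] [InnerProductSpace ℝ E]

/-! ### Coercive operators on the input space -/

/-- An operator bounded below by the identity on a finite-dimensional space is invertible, so
`Ring.inverse` is a genuine inverse for it. -/
lemma isUnit_of_coercive [FiniteDimensional ℝ E] (S : E →L[ℝ] E) (hS : ∀ u, ‖u‖ ^ 2 ≤ ⟪u, S u⟫) : IsUnit S := by
  have hinj : Function.Injective (S : E →ₗ[ℝ] E) := by
    rw [injective_iff_map_eq_zero]
    intro u hu
    have h := hS u
    have hu' : S u = 0 := hu
    rw [hu', inner_zero_right] at h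
    exact norm_eq_zero.mp (pow_eq_zero_iff (two_ne_zero) |>.mp (le_antisymm h (sq_nonneg _)))
  let e : E ≃L[ℝ] E := (LinearEquiv.ofInjectiveEndo (S : E →ₗ[ℝ] E) hinj).toContinuousLinearEquiv
  refine ⟨ContinuousLinearEquiv.toUnit e, ?_⟩
  ext u
  rfl

/-- Coercivity gives `‖S⁻¹ u‖ ≤ ‖u‖`. -/
lemma norm_le_of_coercive (S : E →L[ℝ] E) (hS : ∀ u, ‖u‖ ^ 2 ≤ ⟪u, S u⟫) (w : E) :
    ‖w‖ ≤ ‖S w‖ := by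
  have h := (hS w).trans (real_inner_le_norm _ _)
  by_contra! hlt
  nlinarith [norm_nonneg w, norm_nonneg (S w)]

/-! ### Stability of the perturbed closed loop -/

/-- Trajectories of `L + B (E₁ + E₂ L)` decay at rate `(1 + ζ) / 2`. Controlling `L ^ j (y k)` for
all `j` at once plays the role of a norm adapted to `L`. -/
lemma trajectory_decay (L : H →L[ℝ] H) (B : E →L[ℝ] H) (E₁ E₂ : H →L[ℝ] E) (ζ τ κ : ℝ)
    (hζ : ζ ∈ Set.Ioo (0 : ℝ) 1) (hL : ∀ k : ℕ, ‖L ^ k‖ ≤ τ * ζ ^ k)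
    (hsmall : τ * ‖B‖ * (‖E₁‖ + ‖E₂‖) ≤ (1 - ζ) / 2)
    (y : ℕ → H) (hy0 : ‖y 0‖ ≤ κ) (hy : ∀ i, y (i + 1) = L (y i) + B (E₁ (y i) + E₂ (L (y i))))
    (k : ℕ) : ‖y k‖ ≤ τ * ((1 + ζ) / 2) ^ k * κ := by
  obtain ⟨hζ0, hζ1⟩ := hζ
  have hκ : 0 ≤ κ := (norm_nonneg _).trans hy0
  have hτ : 0 ≤ τ := by simpa using (norm_nonneg _).trans (hL 0)
  have main : ∀ k j : ℕ, ‖(L ^ j) (y k)‖ ≤ τ * ζ ^ j * ((1 + ζ) / 2) ^ k * κ := by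
    intro k
    induction k with
    | zero =>
      intro j
      calc ‖(L ^ j) (y 0)‖ ≤ ‖L ^ j‖ * ‖y 0‖ := le_opNorm _ _
        _ ≤ (τ * ζ ^ j) * κ := by gcongr; exact hL j
        _ = _ := by ring
    | succ k ih =>
      intro j
      set r := ((1 + ζ) / 2) ^ k with hr
      have hr0 : 0 ≤ r := by positivity
      have h0 : ‖y k‖ ≤ τ * r * κ := by simpa using ih 0
      have h1 : ‖L (y k)‖ ≤ τ * r * κ := by
        have h : ‖L (y k)‖ ≤ τ * ζ * r * κ := by simpa using ih 1
        refine h.trans ?_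
        have : 0 ≤ τ * r * κ := by positivity
        nlinarith
      have h2 : ‖(L ^ j) (L (y k))‖ ≤ τ * ζ ^ (j + 1) * r * κ := by
        have h := ih (j + 1)
        rwa [pow_succ L j] at h
      have h3 : ‖E₁ (y k) + E₂ (L (y k))‖ ≤ (‖E₁‖ + ‖E₂‖) * (τ * r * κ) := by
        calc _ ≤ ‖E₁ (y k)‖ + ‖E₂ (L (y k))‖ := norm_add_le _ _
          _ ≤ ‖E₁‖ * ‖y k‖ + ‖E₂‖ * ‖L (y k)‖ := add_le_add (le_opNorm _ _) (le_opNorm _ _)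
          _ ≤ ‖E₁‖ * (τ * r * κ) + ‖E₂‖ * (τ * r * κ) := by gcongr
          _ = _ := by ring
      rw [hy, map_add]
      calc _ ≤ ‖(L ^ j) (L (y k))‖ + ‖(L ^ j) (B (E₁ (y k) + E₂ (L (y k))))‖ := norm_add_le _ _
        _ ≤ τ * ζ ^ (j + 1) * r * κ
            + τ * ζ ^ j * (‖B‖ * ((‖E₁‖ + ‖E₂‖) * (τ * r * κ))) := by
          refine add_le_add h2 ((le_opNorm _ _).trans ?_)
          gcongr
          · exact hL j
          · exact (le_opNorm _ _).trans (by gcongr)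
        _ = τ * ζ ^ j * r * κ * (ζ + τ * ‖B‖ * (‖E₁‖ + ‖E₂‖)) := by ring
        _ ≤ τ * ζ ^ j * r * κ * ((1 + ζ) / 2) := by gcongr; linarith
        _ = _ := by rw [pow_succ, hr]; ring
  simpa using main k 0

/-! ### The operator `R + B* P B` -/

variable [CompleteSpace H] [CompleteSpace E]

lemma inner_adjoint_comp (B : E →L[ℝ] H) (P : H →L[ℝ] H) (u v : E) :
    ⟪u, (adjoint B ∘L P ∘L B) v⟫ = ⟪B u, P (B v)⟫ := by
  simp [adjoint_inner_right]

lemma coercive_add (B : E →L[ℝ] H) (P : H →L[ℝ] H) (R : E →L[ℝ] E)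
    (hR : ∀ u, ‖u‖ ^ 2 ≤ ⟪u, R u⟫) (hP : ∀ x, 0 ≤ ⟪P x, x⟫) (u : E) :
    ‖u‖ ^ 2 ≤ ⟪u, (R + adjoint B ∘L P ∘L B) u⟫ := by
  have h := hP (B u)
  rw [add_apply, inner_add_right, inner_adjoint_comp, real_inner_comm]
  rw [real_inner_comm] at h
  linarith [hR u, real_inner_comm (P (B u)) (B u), real_inner_comm u (R u)]

/-- `⟪x, P y⟫ ≤ ⟪y, P y⟫ + ⟪x, P x⟫ / 4`, from `0 ≤ ⟪P (x / 2 - y), x / 2 - y⟫`. -/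
lemma inner_le_quarter (P : H →L[ℝ] H) (hP_sa : IsSelfAdjoint P) (hP : ∀ x, 0 ≤ ⟪P x, x⟫)
    (x y : H) : ⟪y, P x⟫ ≤ ⟪y, P y⟫ + ⟪x, P x⟫ / 4 := by
  have h := hP ((1 / 2 : ℝ) • x - y)
  have hs : ⟪P x, y⟫ = ⟪x, P y⟫ := hP_sa.isSymmetric x y
  simp only [map_sub, map_smul, inner_sub_left, inner_sub_right, inner_smul_left,
    inner_smul_right, RCLike.conj_to_real] at h
  have h1 := real_inner_comm (P x) x
  have h2 := real_inner_comm (P y) y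
  have h3 := real_inner_comm (P x) y
  have h4 := real_inner_comm (P y) x
  linarith

/-- `‖S⁻¹ B* P x‖² ≤ ‖P‖ ‖x‖² / 4`, uniformly in `B`, for `S = R + B* P B` with `R ≥ 1`. -/
lemma norm_gain_sq_le (B : E →L[ℝ] H) (P : H →L[ℝ] H) (R : E →L[ℝ] E)
    (hR : ∀ u, ‖u‖ ^ 2 ≤ ⟪u, R u⟫) (hP_sa : IsSelfAdjoint P) (hP : ∀ x, 0 ≤ ⟪P x, x⟫)
    (w : E) (x : H) (hw : (R + adjoint B ∘L P ∘L B) w = adjoint B (P x)) :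
    ‖w‖ ^ 2 ≤ ‖P‖ / 4 * ‖x‖ ^ 2 := by
  have h1 : ⟪w, R w⟫ + ⟪B w, P (B w)⟫ = ⟪B w, P x⟫ := by
    rw [← inner_adjoint_comp, ← inner_add_right, ← add_apply, hw, adjoint_inner_right]
  have h2 := inner_le_quarter P hP_sa hP x (B w)
  have h3 : ⟪x, P x⟫ ≤ ‖x‖ * (‖P‖ * ‖x‖) :=
    (real_inner_le_norm _ _).trans (by gcongr; exact P.le_opNorm x)
  nlinarith [hR w]

/-- `S = R + B* P B ≤ ‖R‖ Γ³` when `1 ≤ R` and `‖B‖, ‖P‖ ≤ Γ - 1`. -/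
lemma inner_le_of_norm_le (B : E →L[ℝ] H) (P : H →L[ℝ] H) (R : E →L[ℝ] E)
    (hR_min : ∀ u, ‖u‖ ^ 2 ≤ ⟪u, R u⟫) (Γ : ℝ) (hBn : ‖B‖ ≤ Γ - 1) (hPn : ‖P‖ ≤ Γ - 1) (u : E) :
    ⟪u, (R + adjoint B ∘L P ∘L B) u⟫ ≤ ‖R‖ * Γ ^ 3 * ‖u‖ ^ 2 := by
  have hΓ0 : 0 ≤ Γ - 1 := (norm_nonneg _).trans hBn
  have h1 : ⟪u, (R + adjoint B ∘L P ∘L B) u⟫ = ⟪u, R u⟫ + ⟪B u, P (B u)⟫ := by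
    rw [add_apply, inner_add_right, inner_adjoint_comp]
  have h2 : ⟪u, R u⟫ ≤ ‖R‖ * ‖u‖ ^ 2 := by
    calc _ ≤ ‖u‖ * (‖R‖ * ‖u‖) :=
          (real_inner_le_norm _ _).trans (by gcongr; exact R.le_opNorm u)
      _ = _ := by ring
  have h3 : ⟪B u, P (B u)⟫ ≤ (Γ - 1) ^ 3 * ‖u‖ ^ 2 := by
    have hBu : ‖B u‖ ≤ (Γ - 1) * ‖u‖ := (B.le_opNorm u).trans (by gcongr)
    calc _ ≤ ‖B u‖ * (‖P‖ * ‖B u‖) :=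
          (real_inner_le_norm _ _).trans (by gcongr; exact P.le_opNorm _)
      _ ≤ ((Γ - 1) * ‖u‖) * ((Γ - 1) * ((Γ - 1) * ‖u‖)) := by gcongr
      _ = _ := by ring
  -- `1 ≤ ‖R‖` may fail when `E` is trivial, hence the detour through `‖u‖ ^ 2 ≤ ‖R‖ * ‖u‖ ^ 2`.
  have h4 : ‖u‖ ^ 2 ≤ ‖R‖ * ‖u‖ ^ 2 := (hR_min u).trans h2
  have h5 : (Γ - 1) ^ 3 * ‖u‖ ^ 2 ≤ (Γ - 1) ^ 3 * (‖R‖ * ‖u‖ ^ 2) :=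
    mul_le_mul_of_nonneg_left h4 (pow_nonneg hΓ0 3)
  have h6 : 1 + (Γ - 1) ^ 3 ≤ Γ ^ 3 := by nlinarith
  have h7 : (1 + (Γ - 1) ^ 3) * (‖R‖ * ‖u‖ ^ 2) ≤ Γ ^ 3 * (‖R‖ * ‖u‖ ^ 2) := by gcongr
  linarith

/-! ### The Riccati equation and the cost of a gain -/

/-- Completion of the square in the Riccati equation. -/
lemma riccati_identity (A : H →L[ℝ] H) (B : E →L[ℝ] H) (Q : H →L[ℝ] H)
    (R : E →L[ℝ] E) (P : H →L[ℝ] H) (K : H →L[ℝ] E)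
    (hR_sa : IsSelfAdjoint R) (hP_sa : IsSelfAdjoint P)
    (hSK : ∀ x, (R + adjoint B ∘L P ∘L B) (K x) = -(adjoint B (P (A x))))
    (hric : ∀ x, P x = adjoint A (P (A x)) + adjoint A (P (B (K x))) + Q x) (x : H) (u : E) :
    ⟪x, P x⟫ + ⟪u - K x, (R + adjoint B ∘L P ∘L B) (u - K x)⟫ =
      ⟪x, Q x⟫ + ⟪u, R u⟫ + ⟪A x + B u, P (A x + B u)⟫ := by
  have e1 : ⟪x, P x⟫ = ⟪A x, P (A x)⟫ + ⟪A x, P (B (K x))⟫ + ⟪x, Q x⟫ := by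
    conv_lhs => rw [hric x]
    rw [inner_add_right, inner_add_right, adjoint_inner_right, adjoint_inner_right]
  have hk : ∀ v : E, ⟪v, (R + adjoint B ∘L P ∘L B) (K x)⟫ = -⟪B v, P (A x)⟫ := by
    intro v
    rw [hSK, inner_neg_right, adjoint_inner_right]
  have hPs : ∀ a b, ⟪a, P b⟫ = ⟪b, P a⟫ := fun a b => by
    rw [real_inner_comm]; exact hP_sa.isSymmetric b a
  have hRs : ∀ a b, ⟪a, R b⟫ = ⟪b, R a⟫ := fun a b => by
    rw [real_inner_comm]; exact hR_sa.isSymmetric b a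
  have hSs : ∀ a b, ⟪a, (R + adjoint B ∘L P ∘L B) b⟫ = ⟪b, (R + adjoint B ∘L P ∘L B) a⟫ := by
    intro a b
    rw [add_apply, add_apply, inner_add_right, inner_add_right, inner_adjoint_comp,
      inner_adjoint_comp, hRs a b, hPs (B a)]
  have e2 : ⟪u, (R + adjoint B ∘L P ∘L B) u⟫ = ⟪u, R u⟫ + ⟪B u, P (B u)⟫ := by
    rw [add_apply, inner_add_right, inner_adjoint_comp]
  rw [map_sub, inner_sub_left, inner_sub_right, inner_sub_right, hSs (K x) u, hk, hk, e1, e2,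
    map_add, inner_add_left, inner_add_right, inner_add_right, hPs (A x) (B u),
    hPs (A x) (B (K x))]
  ring

/-- The cost of the feedback gain `F` along a trajectory tending to `0`: the optimal value
`⟪y 0, P (y 0)⟫` plus a quadratic penalty in `F - K`. -/
lemma hasSum_cost (A : H →L[ℝ] H) (B : E →L[ℝ] H) (Q : H →L[ℝ] H)
    (R : E →L[ℝ] E) (P : H →L[ℝ] H) (K F : H →L[ℝ] E)
    (hQ : ∀ x, 0 ≤ ⟪Q x, x⟫) (hR : ∀ u, ‖u‖ ^ 2 ≤ ⟪u, R u⟫)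
    (hR_sa : IsSelfAdjoint R) (hP_sa : IsSelfAdjoint P)
    (hSK : ∀ x, (R + adjoint B ∘L P ∘L B) (K x) = -(adjoint B (P (A x))))
    (hric : ∀ x, P x = adjoint A (P (A x)) + adjoint A (P (B (K x))) + Q x)
    (y : ℕ → H) (hy : ∀ i, y (i + 1) = (A + B ∘L F) (y i))
    (hy0 : Filter.Tendsto y Filter.atTop (nhds 0)) (c : ℝ)
    (hc : HasSum (fun i => ⟪F (y i) - K (y i),
      (R + adjoint B ∘L P ∘L B) (F (y i) - K (y i))⟫) c) :
    HasSum (fun i => ⟪y i, Q (y i)⟫ + ⟪F (y i), R (F (y i))⟫) (⟪y 0, P (y 0)⟫ + c) := by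
  rw [hasSum_iff_tendsto_nat_of_nonneg]
  · have key : ∀ N, ∑ i ∈ Finset.range N, (⟪y i, Q (y i)⟫ + ⟪F (y i), R (F (y i))⟫) =
        ⟪y 0, P (y 0)⟫ - ⟪y N, P (y N)⟫ + ∑ i ∈ Finset.range N, ⟪F (y i) - K (y i),
          (R + adjoint B ∘L P ∘L B) (F (y i) - K (y i))⟫ := by
      intro N
      induction N with
      | zero => simp
      | succ N ih =>
        rw [Finset.sum_range_succ, Finset.sum_range_succ, ih]
        have h := riccati_identity A B Q R P K hR_sa hP_sa hSK hric (y N) (F (y N))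
        have hN : y (N + 1) = A (y N) + B (F (y N)) := by rw [hy]; rfl
        rw [hN]
        linarith
    simp_rw [key]
    have hP0 : Filter.Tendsto (fun N => ⟪y N, P (y N)⟫) Filter.atTop (nhds 0) := by
      have h := hy0.inner (𝕜 := ℝ) ((P.continuous.tendsto 0).comp hy0)
      simpa using h
    have := (hP0.const_sub ⟪y 0, P (y 0)⟫).add hc.tendsto_sum_nat
    simpa using this
  · intro i
    have h1 := hQ (y i)
    rw [real_inner_comm] at h1
    have h2 := (sq_nonneg ‖F (y i)‖).trans (hR (F (y i)))
    positivity

/-- Turns the operator form of the Riccati equation and of the gain into the pointwise form used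
above. -/
lemma riccati_pointwise [FiniteDimensional ℝ E] (A : H →L[ℝ] H) (B : E →L[ℝ] H) (Q : H →L[ℝ] H)
    (R : E →L[ℝ] E) (P : H →L[ℝ] H) (K : H →L[ℝ] E)
    (hR : ∀ u, ‖u‖ ^ 2 ≤ ⟪u, R u⟫) (hP : ∀ x, 0 ≤ ⟪P x, x⟫)
    (hric : P = adjoint A ∘L P ∘L A
      - adjoint A ∘L P ∘L B ∘L Ring.inverse (R + adjoint B ∘L P ∘L B) ∘L
          adjoint B ∘L P ∘L A
      + Q)
    (hK : K = -(Ring.inverse (R + adjoint B ∘L P ∘L B) ∘L adjoint B ∘L P ∘L A)) :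
    (∀ x, (R + adjoint B ∘L P ∘L B) (K x) = -(adjoint B (P (A x)))) ∧
    (∀ x, P x = adjoint A (P (A x)) + adjoint A (P (B (K x))) + Q x) := by
  have hu := isUnit_of_coercive _ (coercive_add B P R hR hP)
  constructor
  · intro x
    have h := Ring.mul_inverse_cancel _ hu
    have h' := DFunLike.congr_fun h (adjoint B (P (A x)))
    rw [hK]
    simp only [neg_apply, comp_apply, map_neg]
    exact congrArg Neg.neg h'
  · intro x
    have h := DFunLike.congr_fun hric x
    rw [hK]
    simp only [neg_apply, comp_apply, map_neg, add_apply, sub_apply] at h ⊢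
    rw [← sub_eq_add_neg]
    exact h

/-- A norm form of `K* K ≤ P`, which holds since the other terms of the Riccati identity at
`u = K x` are nonnegative. -/
lemma norm_gain_sq_le_riccati (A : H →L[ℝ] H) (B : E →L[ℝ] H) (Q : H →L[ℝ] H)
    (R : E →L[ℝ] E) (P : H →L[ℝ] H) (K : H →L[ℝ] E)
    (hQ : ∀ x, 0 ≤ ⟪Q x, x⟫) (hR : ∀ u, ‖u‖ ^ 2 ≤ ⟪u, R u⟫) (hP : ∀ x, 0 ≤ ⟪P x, x⟫)
    (hR_sa : IsSelfAdjoint R) (hP_sa : IsSelfAdjoint P)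
    (hSK : ∀ x, (R + adjoint B ∘L P ∘L B) (K x) = -(adjoint B (P (A x))))
    (hric : ∀ x, P x = adjoint A (P (A x)) + adjoint A (P (B (K x))) + Q x) (x : H) :
    ‖K x‖ ^ 2 ≤ ‖P‖ * ‖x‖ ^ 2 := by
  have h := riccati_identity A B Q R P K hR_sa hP_sa hSK hric x (K x)
  have h1 := hQ x
  have h2 := hP (A x + B (K x))
  rw [real_inner_comm] at h1 h2
  have h3 : ⟪x, P x⟫ ≤ ‖x‖ * (‖P‖ * ‖x‖) :=
    (real_inner_le_norm _ _).trans (by gcongr; exact P.le_opNorm x)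
  rw [sub_self, map_zero, inner_zero_right] at h
  nlinarith [hR (K x)]

/-! ### Perturbation of the gain -/

/-- The splitting `K' - K = E₁ + E₂ L` of the gain perturbation, with both parts of order
`Γ ^ 2 * g`; the factor `L` must be kept apart from `E₂`, as `‖L‖` may itself be of order `Γ ^ 2`
under the assumed bounds. -/
lemma gain_splitting [FiniteDimensional ℝ E] (A A' : H →L[ℝ] H) (B B' : E →L[ℝ] H) (Q : H →L[ℝ] H)
    (R : E →L[ℝ] E) (P P' : H →L[ℝ] H) (K K' : H →L[ℝ] E)
    (hQ : ∀ x, 0 ≤ ⟪Q x, x⟫) (hR : ∀ u, ‖u‖ ^ 2 ≤ ⟪u, R u⟫) (hR_sa : IsSelfAdjoint R)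
    (hP'_sa : IsSelfAdjoint P') (hP' : ∀ x, 0 ≤ ⟪P' x, x⟫)
    (hSK : ∀ x, (R + adjoint B ∘L P ∘L B) (K x) = -(adjoint B (P (A x))))
    (hSK' : ∀ x, (R + adjoint B' ∘L P' ∘L B') (K' x) = -(adjoint B' (P' (A' x))))
    (hric' : ∀ x, P' x = adjoint A' (P' (A' x)) + adjoint A' (P' (B' (K' x))) + Q x)
    (Γ g : ℝ) (hA : ‖A‖ ≤ Γ - 1) (hB : ‖B‖ ≤ Γ - 1) (hP : ‖P‖ ≤ Γ - 1) (hK : ‖K‖ ≤ Γ - 1)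
    (hAA' : ‖A - A'‖ ≤ g) (hBB' : ‖B - B'‖ ≤ g) (hPP' : ‖P - P'‖ ≤ g) :
    ∃ E₁ E₂ : H →L[ℝ] E, (∀ x, K' x - K x = E₁ x + E₂ ((A + B ∘L K) x)) ∧
      ‖E₁‖ + ‖E₂‖ ≤ 3 * Γ ^ 2 * g ∧ ∀ x, ‖K' x - K x‖ ≤ 3 * Γ ^ 3 * g * ‖x‖ := by
  have hg0 : 0 ≤ g := (norm_nonneg _).trans hAA'
  have hΓ : 1 ≤ Γ := by linarith [norm_nonneg A]
  have hP'n : ‖P'‖ ≤ Γ - 1 + g := by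
    calc ‖P'‖ = ‖P - (P - P')‖ := by congr 1; abel
      _ ≤ ‖P‖ + ‖P - P'‖ := norm_sub_le _ _
      _ ≤ _ := by linarith
  rcases le_or_gt 1 g with hg1 | hg1
  · -- For `g ≥ 1` the a priori bound `‖K'‖² ≤ ‖P'‖` already suffices.
    have hK' : ‖K'‖ ≤ Γ * g := by
      refine opNorm_le_bound _ (by positivity) fun x => ?_
      have h := norm_gain_sq_le_riccati A' B' Q R P' K' hQ hR hP' hR_sa hP'_sa hSK' hric' x
      have hb : ‖P'‖ ≤ (Γ * g) ^ 2 := by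
        have h1 : Γ - 1 + g ≤ Γ * g := by nlinarith
        have h2 : 1 ≤ Γ * g := by nlinarith
        nlinarith
      refine abs_le_of_sq_le_sq' ?_ (by positivity) |>.2
      calc ‖K' x‖ ^ 2 ≤ ‖P'‖ * ‖x‖ ^ 2 := h
        _ ≤ (Γ * g) ^ 2 * ‖x‖ ^ 2 := by gcongr
        _ = _ := by ring
    have hd : ‖K' - K‖ ≤ 2 * Γ * g := by
      have := norm_sub_le K' K
      nlinarith
    have hΓ2 : Γ ≤ Γ ^ 2 := by nlinarith
    have hΓ3 : Γ ≤ Γ ^ 3 := by nlinarith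
    have hd2 : ‖K' - K‖ ≤ 3 * Γ ^ 2 * g := hd.trans (by gcongr; norm_num)
    have hd3 : ‖K' - K‖ ≤ 3 * Γ ^ 3 * g := hd.trans (by gcongr; norm_num)
    refine ⟨K' - K, 0, fun x => by simp, by simpa using hd2, fun x => ?_⟩
    calc ‖K' x - K x‖ = ‖(K' - K) x‖ := rfl
      _ ≤ ‖K' - K‖ * ‖x‖ := le_opNorm _ _
      _ ≤ _ := by gcongr
  · set S' := R + adjoint B' ∘L P' ∘L B' with hS'
    have hco : ∀ u, ‖u‖ ^ 2 ≤ ⟪u, S' u⟫ := coercive_add B' P' R hR hP'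
    have hu := isUnit_of_coercive _ hco
    have hinv : ∀ v, S' (Ring.inverse S' v) = v := fun v => by
      have h := DFunLike.congr_fun (Ring.mul_inverse_cancel _ hu) v
      exact h
    have hinj : ∀ v w, S' v = S' w → v = w := fun v w h => by
      have h0 := norm_le_of_coercive S' hco (v - w)
      rw [map_sub, h, sub_self, norm_zero] at h0
      exact sub_eq_zero.mp (norm_le_zero_iff.mp h0)
    let D : H →L[ℝ] H := (A' - A) + (B' - B) ∘L K
    let G : H →L[ℝ] E := adjoint B' ∘L P' - adjoint B ∘L P
    let E₁ : H →L[ℝ] E := -(Ring.inverse S' ∘L adjoint B' ∘L P' ∘L D)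
    let E₂ : H →L[ℝ] E := -(Ring.inverse S' ∘L G)
    have hD : ‖D‖ ≤ Γ * g := by
      calc ‖D‖ ≤ ‖A' - A‖ + ‖(B' - B) ∘L K‖ := norm_add_le _ _
        _ ≤ ‖A' - A‖ + ‖B' - B‖ * ‖K‖ := by gcongr; exact opNorm_comp_le _ _
        _ ≤ g + g * (Γ - 1) := by
          rw [norm_sub_rev A' A, norm_sub_rev B' B]; gcongr
        _ = _ := by ring
    have hG : ‖G‖ ≤ (2 * Γ - 1) * g := by
      have hB' : ‖B'‖ ≤ Γ := by
        calc ‖B'‖ = ‖B - (B - B')‖ := by congr 1; abel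
          _ ≤ ‖B‖ + ‖B - B'‖ := norm_sub_le _ _
          _ ≤ _ := by linarith
      have hGeq : G = adjoint B' ∘L (P' - P) + adjoint (B' - B) ∘L P := by
        ext x
        simp [G]
      calc ‖G‖ ≤ ‖adjoint B' ∘L (P' - P)‖ + ‖adjoint (B' - B) ∘L P‖ := by
            rw [hGeq]; exact norm_add_le _ _
        _ ≤ ‖adjoint B'‖ * ‖P' - P‖ + ‖adjoint (B' - B)‖ * ‖P‖ :=
          add_le_add (opNorm_comp_le _ _) (opNorm_comp_le _ _)
        _ = ‖B'‖ * ‖P - P'‖ + ‖B - B'‖ * ‖P‖ := by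
          rw [LinearIsometryEquiv.norm_map, LinearIsometryEquiv.norm_map, norm_sub_rev P' P,
            norm_sub_rev B' B]
        _ ≤ Γ * g + g * (Γ - 1) := by gcongr
        _ = _ := by ring
    have hE₁ : ‖E₁‖ ≤ Γ ^ 2 * g := by
      refine opNorm_le_bound _ (by positivity) fun x => ?_
      have h := norm_gain_sq_le B' P' R hR hP'_sa hP' (Ring.inverse S' (adjoint B' (P' (D x))))
        (D x) (hinv _)
      have hx : ‖D x‖ ≤ Γ * g * ‖x‖ := (le_opNorm _ _).trans (by gcongr)
      have hE : ‖E₁ x‖ = ‖Ring.inverse S' (adjoint B' (P' (D x)))‖ := norm_neg _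
      rw [hE]
      refine abs_le_of_sq_le_sq' ?_ (by positivity) |>.2
      calc _ ≤ ‖P'‖ / 4 * ‖D x‖ ^ 2 := h
        _ ≤ Γ ^ 2 * (Γ * g * ‖x‖) ^ 2 := by
          gcongr
          nlinarith
        _ = _ := by ring
    have hE₂ : ‖E₂‖ ≤ (2 * Γ - 1) * g := by
      refine opNorm_le_bound _ (by nlinarith) fun x => ?_
      have hE : ‖E₂ x‖ = ‖Ring.inverse S' (G x)‖ := norm_neg _
      rw [hE]
      calc _ ≤ ‖S' (Ring.inverse S' (G x))‖ := norm_le_of_coercive S' hco _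
        _ = ‖G x‖ := by rw [hinv]
        _ ≤ ‖G‖ * ‖x‖ := le_opNorm _ _
        _ ≤ _ := by gcongr
    have hsplit : ∀ x, K' x - K x = E₁ x + E₂ ((A + B ∘L K) x) := by
      intro x
      apply hinj
      have hRK : R (K x) = -(adjoint B (P (A x))) - adjoint B (P (B (K x))) := by
        rw [← hSK]; simp
      have e1 : S' (E₁ x) = -(adjoint B' (P' (D x))) := by
        simp only [E₁, neg_apply, comp_apply, map_neg, hinv]
      have e2 : ∀ v, S' (E₂ v) = -(G v) := fun v => by
        simp only [E₂, neg_apply, comp_apply, map_neg, hinv]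
      have e3 : S' (K x) = R (K x) + adjoint B' (P' (B' (K x))) := by simp [hS']
      rw [map_sub, map_add, hSK', e1, e2, e3, hRK]
      simp only [D, G, add_apply, sub_apply, comp_apply, map_add, map_sub]
      abel
    refine ⟨E₁, E₂, hsplit, ?_, fun x => ?_⟩
    · have : 2 * Γ - 1 ≤ 2 * Γ ^ 2 := by nlinarith
      nlinarith
    · have hL : ‖A + B ∘L K‖ ≤ (Γ - 1) * Γ := by
        calc _ ≤ ‖A‖ + ‖B ∘L K‖ := norm_add_le _ _
          _ ≤ ‖A‖ + ‖B‖ * ‖K‖ := by gcongr; exact opNorm_comp_le _ _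
          _ ≤ (Γ - 1) + (Γ - 1) * (Γ - 1) := by gcongr
          _ = _ := by ring
      rw [hsplit]
      have h2 : 0 ≤ (2 * Γ - 1) * g := by nlinarith
      calc _ ≤ ‖E₁ x‖ + ‖E₂ ((A + B ∘L K) x)‖ := norm_add_le _ _
        _ ≤ ‖E₁‖ * ‖x‖ + ‖E₂‖ * (‖A + B ∘L K‖ * ‖x‖) :=
          add_le_add (le_opNorm _ _)
            ((le_opNorm _ _).trans (by gcongr; exact le_opNorm _ _))
        _ ≤ (Γ ^ 2 * g) * ‖x‖ + ((2 * Γ - 1) * g) * (((Γ - 1) * Γ) * ‖x‖) := by gcongr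
        _ = (Γ ^ 2 + (2 * Γ - 1) * ((Γ - 1) * Γ)) * g * ‖x‖ := by ring
        _ ≤ 3 * Γ ^ 3 * g * ‖x‖ := by
          gcongr
          nlinarith [pow_pos (by linarith : (0 : ℝ) < Γ) 3]

/-! ### Summation of the cost excess -/

/-- Passing from rate `ζ` to rate `(1 + ζ) / 2` at most doubles the geometric sum of squares. -/
lemma summable_and_tsum_le (ζ C : ℝ) (hζ0 : 0 < ζ) (hζ1 : ζ < 1) (hC : 0 ≤ C) (c : ℕ → ℝ)
    (hc0 : ∀ i, 0 ≤ c i) (hc : ∀ i, c i ≤ C * (((1 + ζ) / 2) ^ i) ^ 2) :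
    Summable c ∧ ∑' i, c i ≤ 2 * C / (1 - ζ ^ 2) := by
  set q := ((1 + ζ) / 2) ^ 2 with hq
  have hq0 : 0 ≤ q := sq_nonneg _
  have hq1 : q < 1 := by rw [hq]; nlinarith
  have hgeo : HasSum (fun i : ℕ => C * q ^ i) (C * (1 - q)⁻¹) :=
    (hasSum_geometric_of_lt_one hq0 hq1).mul_left C
  have hcq : ∀ i, c i ≤ C * q ^ i := fun i => by
    rw [hq, ← pow_mul, mul_comm 2 i, pow_mul]; exact hc i
  have hsum := Summable.of_nonneg_of_le hc0 hcq hgeo.summable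
  have h1ζ : 0 < 1 - ζ ^ 2 := by nlinarith
  have hinv : (1 - q)⁻¹ ≤ 2 / (1 - ζ ^ 2) := by
    rw [inv_eq_one_div, div_le_div_iff₀ (by linarith) h1ζ, hq]
    nlinarith
  refine ⟨hsum, ?_⟩
  calc _ ≤ C * (1 - q)⁻¹ := hasSum_le hcq hsum.hasSum hgeo
    _ ≤ C * (2 / (1 - ζ ^ 2)) := by gcongr
    _ = _ := by ring

end Aux

/-! ### The bound on the cost excess -/

/-- Convergence of the LQR objective: applying the gain `K̃` computed from the
Nyström-approximated dynamics to the exact dynamics incurs a cost excess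
`Ĵ - J ≤ 36 ‖R‖ Γ⁹ g(ε)² κ² τ(L, ζ)² / (1 - ζ²)`. -/
theorem stmt_19
    {H₁ : Type*} [NormedAddCommGroup H₁] [InnerProductSpace ℝ H₁] [CompleteSpace H₁]
    {n : ℕ}
    (A A' : H₁ →L[ℝ] H₁)
    (B B' : EuclideanSpace ℝ (Fin n) →L[ℝ] H₁)
    (Q : H₁ →L[ℝ] H₁) (hQ_sa : IsSelfAdjoint Q) (hQ_pos : ∀ x, 0 ≤ ⟪Q x, x⟫)
    (R : EuclideanSpace ℝ (Fin n) →L[ℝ] EuclideanSpace ℝ (Fin n))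
    (hR_sa : IsSelfAdjoint R) (hR_min : ∀ u, ‖u‖ ^ 2 ≤ ⟪u, R u⟫)
    (P P' : H₁ →L[ℝ] H₁)
    (hP_sa : IsSelfAdjoint P) (hP_pos : ∀ x, 0 ≤ ⟪P x, x⟫)
    (hP'_sa : IsSelfAdjoint P') (hP'_pos : ∀ x, 0 ≤ ⟪P' x, x⟫)
    (hP_ric : P = adjoint A ∘L P ∘L A
      - adjoint A ∘L P ∘L B ∘L Ring.inverse (R + adjoint B ∘L P ∘L B) ∘L
          adjoint B ∘L P ∘L A
      + Q)
    (hP'_ric : P' = adjoint A' ∘L P' ∘L A'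
      - adjoint A' ∘L P' ∘L B' ∘L Ring.inverse (R + adjoint B' ∘L P' ∘L B') ∘L
          adjoint B' ∘L P' ∘L A'
      + Q)
    (K K' : H₁ →L[ℝ] EuclideanSpace ℝ (Fin n))
    (hK : K = -(Ring.inverse (R + adjoint B ∘L P ∘L B) ∘L adjoint B ∘L P ∘L A))
    (hK' : K' = -(Ring.inverse (R + adjoint B' ∘L P' ∘L B') ∘L adjoint B' ∘L P' ∘L A'))
    (L : H₁ →L[ℝ] H₁) (hL : L = A + B ∘L K)
    (ζ : ℝ) (hζ : ζ ∈ Set.Ioo (0 : ℝ) 1)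
    (hspec : spectralRadius ℝ L ≤ ENNReal.ofReal ζ)
    (hbdd : BddAbove (Set.range fun k : ℕ => ‖L ^ k‖ / ζ ^ k))
    (τ : ℝ) (hτ : τ = ⨆ k : ℕ, ‖L ^ k‖ / ζ ^ k)
    (Γ : ℝ) (hΓ : Γ = 1 + max (max ‖A‖ ‖B‖) (max ‖P‖ ‖K‖))
    (κ : ℝ) (z₀ : H₁) (hz₀ : ‖z₀‖ ≤ κ)
    (z zh : ℕ → H₁)
    (hz0 : z 0 = z₀) (hz : ∀ i, z (i + 1) = (A + B ∘L K) (z i))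
    (hzh0 : zh 0 = z₀) (hzh : ∀ i, zh (i + 1) = (A + B ∘L K') (zh i))
    (ε g : ℝ) (hA : ‖A - A'‖ ≤ ε) (hB : ‖B - B'‖ ≤ ε)
    (hεg : ε ≤ g) (hPP' : ‖P - P'‖ ≤ g)
    (hg : g ≤ (1 - ζ) / (6 * ‖B‖ * τ * Γ ^ 2)) :
    Summable (fun i : ℕ => ⟪z i, Q (z i)⟫ + ⟪K (z i), R (K (z i))⟫) ∧
    Summable (fun i : ℕ => ⟪zh i, Q (zh i)⟫ + ⟪K' (zh i), R (K' (zh i))⟫) ∧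
    (∑' i : ℕ, (⟪zh i, Q (zh i)⟫ + ⟪K' (zh i), R (K' (zh i))⟫))
        - (∑' i : ℕ, (⟪z i, Q (z i)⟫ + ⟪K (z i), R (K (z i))⟫))
      ≤ 36 * ‖R‖ * Γ ^ 9 * g ^ 2 * κ ^ 2 * τ ^ 2 / (1 - ζ ^ 2) := by
  have hζ0 : 0 < ζ := hζ.1
  have hζ1 : ζ < 1 := hζ.2
  obtain ⟨hSK, hric⟩ := riccati_pointwise A B Q R P K hR_min hP_pos hP_ric hK
  obtain ⟨hSK', hric'⟩ := riccati_pointwise A' B' Q R P' K' hR_min hP'_pos hP'_ric hK'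
  have hAn : ‖A‖ ≤ Γ - 1 := by rw [hΓ]; simp
  have hBn : ‖B‖ ≤ Γ - 1 := by rw [hΓ]; simp
  have hPn : ‖P‖ ≤ Γ - 1 := by rw [hΓ]; simp
  have hKn : ‖K‖ ≤ Γ - 1 := by rw [hΓ]; simp
  have hΓ1 : 1 ≤ Γ := by linarith [norm_nonneg A]
  have hg0 : 0 ≤ g := (norm_nonneg _).trans hPP'
  have hκ : 0 ≤ κ := (norm_nonneg _).trans hz₀
  have hLk : ∀ k : ℕ, ‖L ^ k‖ ≤ τ * ζ ^ k := fun k => by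
    rw [← div_le_iff₀ (by positivity), hτ]
    exact le_ciSup hbdd k
  have hτ0 : 0 ≤ τ := by simpa using (norm_nonneg _).trans (hLk 0)
  obtain ⟨E₁, E₂, hsplit, hE, hΔ⟩ := gain_splitting A A' B B' Q R P P' K K' hQ_pos hR_min hR_sa
    hP'_sa hP'_pos hSK hSK' hric' Γ g hAn hBn hPn hKn (hA.trans hεg) (hB.trans hεg) hPP'
  -- If `‖B‖ * τ = 0` the quotient bounding `g` is a junk value, but this product then vanishes.
  have hsmall : τ * ‖B‖ * (3 * Γ ^ 2 * g) ≤ (1 - ζ) / 2 := by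
    rcases (mul_nonneg hτ0 (norm_nonneg B)).eq_or_lt with h | h
    · rw [← h]; linarith
    · have hpos : 0 < 6 * ‖B‖ * τ * Γ ^ 2 := by
        have : 0 < 6 * (τ * ‖B‖) * Γ ^ 2 := by positivity
        linarith
      rw [le_div_iff₀ hpos] at hg
      linarith
  have hdec_h := trajectory_decay L B E₁ E₂ ζ τ κ hζ hLk
    ((mul_le_mul_of_nonneg_left hE (by positivity)).trans hsmall) zh (by rw [hzh0]; exact hz₀)
    (fun i => by
      rw [hL, ← hsplit, hzh, add_apply, add_apply, comp_apply, comp_apply, map_sub]; abel)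
  have hdec := trajectory_decay L B 0 0 ζ τ κ hζ hLk (by simp; linarith) z
    (by rw [hz0]; exact hz₀) (fun i => by rw [hL, hz]; simp)
  have hlim : ∀ y : ℕ → H₁, (∀ k, ‖y k‖ ≤ τ * ((1 + ζ) / 2) ^ k * κ) →
      Filter.Tendsto y Filter.atTop (nhds 0) := by
    intro y hy
    refine squeeze_zero_norm hy ?_
    have h := ((tendsto_pow_atTop_nhds_zero_of_lt_one (r := (1 + ζ) / 2) (by linarith)
      (by linarith)).const_mul τ).mul_const κ
    simpa using h
  set S := R + adjoint B ∘L P ∘L B with hS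
  have hSn : ∀ u, ⟪u, S u⟫ ≤ ‖R‖ * Γ ^ 3 * ‖u‖ ^ 2 :=
    inner_le_of_norm_le B P R hR_min Γ hBn hPn
  set C := 9 * ‖R‖ * Γ ^ 9 * g ^ 2 * κ ^ 2 * τ ^ 2 with hC
  have hC0 : 0 ≤ C := by positivity
  have hterm : ∀ i, ⟪K' (zh i) - K (zh i), S (K' (zh i) - K (zh i))⟫ ≤
      C * (((1 + ζ) / 2) ^ i) ^ 2 := by
    intro i
    have h1 : ‖K' (zh i) - K (zh i)‖ ≤ 3 * Γ ^ 3 * g * (τ * ((1 + ζ) / 2) ^ i * κ) :=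
      (hΔ _).trans (by gcongr; exact hdec_h i)
    calc _ ≤ ‖R‖ * Γ ^ 3 * ‖K' (zh i) - K (zh i)‖ ^ 2 := hSn _
      _ ≤ ‖R‖ * Γ ^ 3 * (3 * Γ ^ 3 * g * (τ * ((1 + ζ) / 2) ^ i * κ)) ^ 2 := by gcongr
      _ = C * (((1 + ζ) / 2) ^ i) ^ 2 := by rw [hC]; ring
  have hnn : ∀ i, 0 ≤ ⟪K' (zh i) - K (zh i), S (K' (zh i) - K (zh i))⟫ := fun i =>
    (sq_nonneg _).trans (coercive_add B P R hR_min hP_pos _)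
  obtain ⟨hsum, hle⟩ := summable_and_tsum_le ζ C hζ0 hζ1 hC0 _ hnn hterm
  have hJh := hasSum_cost A B Q R P K K' hQ_pos hR_min hR_sa hP_sa hSK hric zh hzh
    (hlim zh hdec_h) _ hsum.hasSum
  have h0 : HasSum (fun i => ⟪K (z i) - K (z i), S (K (z i) - K (z i))⟫) 0 := by
    simp only [sub_self, map_zero, inner_zero_right]
    exact hasSum_zero
  have hJ := hasSum_cost A B Q R P K K hQ_pos hR_min hR_sa hP_sa hSK hric z hz (hlim z hdec) 0 h0
  refine ⟨hJ.summable, hJh.summable, ?_⟩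
  rw [hJ.tsum_eq, hJh.tsum_eq, hz0, hzh0]
  have h1ζ : 0 < 1 - ζ ^ 2 := by nlinarith
  calc _ ≤ 2 * C / (1 - ζ ^ 2) := by linarith
    _ = 18 * ‖R‖ * Γ ^ 9 * g ^ 2 * κ ^ 2 * τ ^ 2 / (1 - ζ ^ 2) := by rw [hC]; ring
    _ ≤ _ := by gcongr; norm_num
end
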